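/- arXiv:2205.14855 — 3 statements merged into one kernel-verified Lean document; each statement's English description precedes it below -/
import Mathlib

section
/- Suppose σ_r − σ_{r+1} > 2‖(I − U_r U_rᵀ) y_n‖ (in particular (I − U_r U_rᵀ)y_n may be arbitrary; equivalently ρ := (σ_r − σ_{r+1})/‖(I − U_r U_rᵀ)y_n‖ > 2 when the denominator is nonzero). Then for any choice of leading-r orthonormal left singular vectors Û_r of Ŷ, ‖Û_r Û_rᵀ − U_r U_rᵀ‖_F ≤ 4√2 · (‖(I − U_r U_rᵀ) y_n‖/(σ_r − σ_{r+1})) · √( Σ_{i=1}^{r} (u_iᵀ y_n / σ_i)² ). -/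
open Matrix MeasureTheory ProbabilityTheory
open scoped BigOperators ENNReal NNReal

noncomputable section

/-- Euclidean norm of a vector in `Fin p → ℝ`. -/
def vnorm {p : ℕ} (x : Fin p → ℝ) : ℝ := Real.sqrt (∑ i, (x i) ^ 2)

/-- Frobenius norm of a real matrix. -/
def fnorm {m n : ℕ} (A : Matrix (Fin m) (Fin n) ℝ) : ℝ :=
  Real.sqrt (∑ i, ∑ j, (A i j) ^ 2)

/-- Operator (spectral) norm of a real matrix. -/
def opnorm {m n : ℕ} (A : Matrix (Fin m) (Fin n) ℝ) : ℝ :=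
  ‖LinearMap.toContinuousLinearMap (Matrix.toEuclideanLin A)‖

/-- A (full) singular value decomposition of a real `p × n` matrix `A`:
`A = U D Vᵀ` with `U, V` orthogonal and `D` the rectangular diagonal matrix with the
nonincreasing nonnegative singular values `sv 0 ≥ sv 1 ≥ ⋯` on the diagonal
(0-indexed, so the math `σ_i` is `sv (i-1)`), extended by zero beyond `min p n`. -/
structure SVDData (p n : ℕ) (A : Matrix (Fin p) (Fin n) ℝ) where
  U : Matrix (Fin p) (Fin p) ℝ
  V : Matrix (Fin n) (Fin n) ℝ
  sv : ℕ → ℝ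
  hU : Uᵀ * U = 1
  hV : Vᵀ * V = 1
  sv_anti : ∀ i j : ℕ, i ≤ j → sv j ≤ sv i
  sv_nonneg : ∀ i, 0 ≤ sv i
  sv_zero : ∀ j, min p n ≤ j → sv j = 0
  decomp : A = U * (Matrix.of fun (i : Fin p) (j : Fin n) => if (i : ℕ) = (j : ℕ) then sv (i : ℕ) else 0) * Vᵀ

/-- Projection matrix `U_{1:r} U_{1:r}ᵀ` onto the span of the first `r` columns of `U`. -/
def projr {p : ℕ} (U : Matrix (Fin p) (Fin p) ℝ) (r : ℕ) : Matrix (Fin p) (Fin p) ℝ :=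
  Matrix.of fun i j => ∑ l : Fin p, if (l : ℕ) < r then U i l * U j l else 0

/-- The `l`-th (0-indexed) column of a matrix, as a vector. -/
def matCol {p q : ℕ} (U : Matrix (Fin p) (Fin q) ℝ) (l : ℕ) : Fin p → ℝ :=
  fun i => if h : l < q then U i ⟨l, h⟩ else 0

/-- `β` for a cluster assignment: `(k/n) ·` (size of the smallest cluster),
so that `β·n/k` is the size of the smallest cluster. -/
def betaMin (n k : ℕ) (z : Fin n → Fin k) : ℝ :=
  ((k : ℝ) / n) * ⨅ a : Fin k, ((Finset.univ.filter fun i => z i = a).card : ℝ)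

/-- Minimum pairwise distance between the centers. -/
def Delta {p k : ℕ} (θ : Fin k → Fin p → ℝ) : ℝ :=
  ⨅ q : {q : Fin k × Fin k // q.1 ≠ q.2}, vnorm (fun i => θ q.1.1 i - θ q.1.2 i)

/-- Misclustering error `ℓ(z, z*)`. -/
def miscl {n k : ℕ} (z zs : Fin n → Fin k) : ℝ :=
  (⨅ φ : Equiv.Perm (Fin k), ((Finset.univ.filter fun i => z i ≠ φ (zs i)).card : ℝ)) / n

/-- `(z, c)` is a global minimizer of the k-means objective for the columns of `W * X`. -/
def IsKMeans {p n k : ℕ} (W : Matrix (Fin p) (Fin p) ℝ) (X : Matrix (Fin p) (Fin n) ℝ)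
    (z : Fin n → Fin k) (c : Fin k → Fin p → ℝ) : Prop :=
  ∀ (z' : Fin n → Fin k) (c' : Fin k → Fin p → ℝ),
    ∑ i, ∑ a, (W.mulVec (fun b => X b i) a - c (z i) a) ^ 2 ≤
      ∑ i, ∑ a, (W.mulVec (fun b => X b i) a - c' (z' i) a) ^ 2

open Finset in
lemma aux_weyl {p r : ℕ} (hrp : r < p) (W : Matrix (Fin p) (Fin p) ℝ) (hW2 : W * Wᵀ = 1)
    (a b : Fin p → ℝ) (s t : ℕ → ℝ) (hs : ∀ i j, i ≤ j → s j ≤ s i) (hs0 : ∀ i, 0 ≤ s i)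
    (ht : ∀ i j, i ≤ j → t j ≤ t i) (ht0 : ∀ i, 0 ≤ t i) (hb : b = W *ᵥ a)
    (hrel : ∀ j l : Fin p, t j ^ 2 * W j l = W j l * s l ^ 2 + b j * a l) :
    t r ^ 2 ≤ s r ^ 2 + ∑ l : Fin p, if (l : ℕ) < r then 0 else a l ^ 2 := by
  set w2 := ∑ l : Fin p, if (l : ℕ) < r then 0 else a l ^ 2 with hw2
  -- the vector
  obtain ⟨c, hc0, hcs, hcW⟩ : ∃ c : Fin p → ℝ, c ≠ 0 ∧ (∀ j : Fin p, r < (j : ℕ) → c j = 0) ∧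
      ∀ l : Fin p, (l : ℕ) < r → (c ᵥ* W) l = 0 := by
    let emb : Fin (r+1) → Fin p := fun i => ⟨i, by omega⟩
    let emb' : Fin r → Fin p := fun i => ⟨i, by omega⟩
    let f : (Fin (r+1) → ℝ) →ₗ[ℝ] (Fin r → ℝ) := Matrix.vecMulLinear (W.submatrix emb emb')
    have hk : f.ker ≠ ⊥ := LinearMap.ker_ne_bot_of_finrank_lt (by simp)
    obtain ⟨v, hv, hv0⟩ := (Submodule.ne_bot_iff _).1 hk
    refine ⟨fun j => if h : (j : ℕ) < r + 1 then v ⟨j, h⟩ else 0, ?_, ?_, ?_⟩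
    · intro h
      apply hv0
      ext i
      have := congrFun h (emb i)
      have hi : (i : ℕ) ≤ r := by omega
      simpa [emb, hi] using this
    · intro j hj
      have : ¬ ((j : ℕ) < r + 1) := by omega
      simp [this]
    · intro l hl
      have h1 := congrFun (LinearMap.mem_ker.1 hv) ⟨l, hl⟩
      simp only [f, Matrix.vecMulLinear_apply, Matrix.vecMul, dotProduct, Matrix.submatrix_apply, Pi.zero_apply] at h1 ⊢
      refine Eq.trans ?_ h1
      symm
      apply Finset.sum_of_injOn emb
      · intro x _ y _ h
        simpa [emb, Fin.ext_iff] using h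
      · simp
      · intro j _ hj
        have : ¬ ((j : ℕ) < r + 1) := by
          intro h
          apply hj
          exact ⟨⟨j, h⟩, by simp, rfl⟩
        simp [this]
      · intro i _
        have hi : (i : ℕ) ≤ r := by omega
        simp [emb, emb', hi]
  set x := c ᵥ* W with hx
  have hxx : x ⬝ᵥ x = c ⬝ᵥ c := by
    rw [hx]
    nth_rw 2 [← Matrix.mulVec_transpose]
    rw [← Matrix.dotProduct_mulVec, Matrix.mulVec_mulVec, hW2, Matrix.one_mulVec]
  have hxa : x ⬝ᵥ a = c ⬝ᵥ b := by
    rw [hx, hb, Matrix.dotProduct_mulVec]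
  have hxl : ∀ l, x l = ∑ j, c j * W j l := fun l => rfl
  -- energy
  have h1 : ∀ l : Fin p, ∑ j : Fin p, t j ^ 2 * c j * W j l = x l * s l ^ 2 + (c ⬝ᵥ b) * a l := by
    intro l
    rw [hxl, dotProduct, Finset.sum_mul, Finset.sum_mul, ← Finset.sum_add_distrib]
    refine Finset.sum_congr rfl fun j _ => ?_
    linear_combination c j * hrel j l
  have h2 : (fun j : Fin p => t j ^ 2 * c j) ᵥ* W = fun l => x l * s l ^ 2 + (c ⬝ᵥ b) * a l :=
    funext h1
  have h3 : (fun j : Fin p => t j ^ 2 * c j) ⬝ᵥ c = ∑ l, (x l * s l ^ 2 + (c ⬝ᵥ b) * a l) * x l := by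
    change _ = (fun l => x l * s l ^ 2 + (c ⬝ᵥ b) * a l) ⬝ᵥ x
    rw [← h2, hx]
    rw [← Matrix.mulVec_transpose W c, ← Matrix.dotProduct_mulVec, Matrix.mulVec_mulVec, hW2, Matrix.one_mulVec]
  have h4 : ∑ l, (x l * s l ^ 2 + (c ⬝ᵥ b) * a l) * x l = ∑ l, x l ^ 2 * s l ^ 2 + (x ⬝ᵥ a) ^ 2 := by
    rw [← hxa]
    have : (x ⬝ᵥ a) ^ 2 = ∑ l, (x ⬝ᵥ a) * (x l * a l) := by
      rw [← Finset.mul_sum, sq]; rfl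
    rw [this, ← Finset.sum_add_distrib]
    refine Finset.sum_congr rfl fun j _ => by ring
  have h5 : t r ^ 2 * (c ⬝ᵥ c) ≤ (fun j : Fin p => t j ^ 2 * c j) ⬝ᵥ c := by
    simp only [dotProduct]
    rw [Finset.mul_sum]
    refine Finset.sum_le_sum fun j _ => ?_
    by_cases hj : r < (j : ℕ)
    · simp [hcs j hj]
    · have := pow_le_pow_left₀ (ht0 r) (ht j r (by omega)) 2
      nlinarith [mul_self_nonneg (c j)]
  have h6 : ∑ l, x l ^ 2 * s l ^ 2 ≤ s r ^ 2 * (x ⬝ᵥ x) := by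
    simp only [dotProduct]
    rw [Finset.mul_sum]
    refine Finset.sum_le_sum fun l _ => ?_
    by_cases hl : (l : ℕ) < r
    · simp [hcW l hl]
    · have := pow_le_pow_left₀ (hs0 l) (hs r l (by omega)) 2
      nlinarith [mul_self_nonneg (x l)]
  have h7 : (x ⬝ᵥ a) ^ 2 ≤ (x ⬝ᵥ x) * w2 := by
    have e1 : x ⬝ᵥ a = ∑ l, x l * (if (l : ℕ) < r then 0 else a l) := by
      refine Finset.sum_congr rfl fun l _ => ?_
      by_cases hl : (l : ℕ) < r
      · simp [hcW l hl]
      · simp [hl]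
    have e2 : w2 = ∑ l : Fin p, (if (l : ℕ) < r then 0 else a l) ^ 2 := by
      rw [hw2]
      refine Finset.sum_congr rfl fun l _ => ?_
      split_ifs <;> simp
    have e3 : x ⬝ᵥ x = ∑ l, x l ^ 2 := Finset.sum_congr rfl fun l _ => by ring
    rw [e1, e2, e3]
    exact Finset.sum_mul_sq_le_sq_mul_sq _ _ _
  have hpos : 0 < c ⬝ᵥ c := by
    have : 0 ≤ c ⬝ᵥ c := Finset.sum_nonneg fun l _ => mul_self_nonneg _
    refine lt_of_le_of_ne this fun h => hc0 (dotProduct_self_eq_zero.1 h.symm)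
  rw [hxx] at h6 h7
  have : t r ^ 2 * (c ⬝ᵥ c) ≤ (s r ^ 2 + w2) * (c ⬝ᵥ c) := by
    rw [h3, h4] at h5
    nlinarith
  exact le_of_mul_le_mul_right this hpos

lemma aux_main {p r : ℕ} (hr0 : 0 < r) (W : Matrix (Fin p) (Fin p) ℝ)
    (hW : Wᵀ * W = 1) (hW2 : W * Wᵀ = 1)
    (a b : Fin p → ℝ) (s t : ℕ → ℝ) (hs : ∀ i j, i ≤ j → s j ≤ s i) (hs0 : ∀ i, 0 ≤ s i)
    (ht : ∀ i j, i ≤ j → t j ≤ t i) (ht0 : ∀ i, 0 ≤ t i) (hb : b = W *ᵥ a)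
    (hrel : ∀ j l : Fin p, t j ^ 2 * W j l = W j l * s l ^ 2 + b j * a l)
    (w : ℝ) (hw0 : 0 ≤ w) (hw : w ^ 2 = ∑ l : Fin p, if (l : ℕ) < r then 0 else a l ^ 2)
    (hgap : 2 * w < s (r - 1) - s r) :
    ∑ j : Fin p, ∑ l : Fin p, (if r ≤ (j : ℕ) ∧ (l : ℕ) < r then W j l ^ 2 else 0) ≤
      4 * w ^ 2 / (s (r - 1) - s r) ^ 2 *
        ∑ l : Fin p, if (l : ℕ) < r then (a l / s l) ^ 2 else 0 := by
  set g := s (r - 1) - s r with hg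
  have hgpos : 0 < g := by linarith
  let a' : Fin p → ℝ := fun l => if (l : ℕ) < r then 0 else a l
  let e := W *ᵥ a'
  have he : ∑ j, e j ^ 2 = w ^ 2 := by
    have : e ⬝ᵥ e = a' ⬝ᵥ a' := by
      simp only [e]
      rw [Matrix.dotProduct_mulVec, ← Matrix.mulVec_transpose, Matrix.mulVec_mulVec, hW, Matrix.one_mulVec]
    rw [hw]
    calc _ = e ⬝ᵥ e := Finset.sum_congr rfl fun l _ => by ring
      _ = _ := this
      _ = _ := Finset.sum_congr rfl fun l _ => by simp only [a']; split_ifs <;> ring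
  have key : ∀ j : Fin p, r ≤ (j : ℕ) → ∀ l : Fin p, (l : ℕ) < r →
      0 < s l ∧ s l * (g / 2) ≤ s l ^ 2 - t j ^ 2 := by
    intro j hj l hl
    have h1 := aux_weyl (by omega : r < p) W hW2 a b s t hs hs0 ht ht0 hb hrel
    rw [← hw] at h1
    have h2 : t r ≤ s r + w := by
      apply abs_le_of_sq_le_sq' _ (by linarith [hs0 r]) |>.2
      nlinarith [hs0 r]
    have h3 := ht r j hj
    have h4 := hs l (r-1) (by omega)
    have h5 := hs0 r
    have h6 := ht0 j
    have h7 : g / 2 ≤ s l - t j := by linarith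
    have h8 : 0 < s l := by linarith
    refine ⟨h8, ?_⟩
    nlinarith
  have hbe : ∀ j : Fin p, r ≤ (j : ℕ) → b j ^ 2 ≤ e j ^ 2 := by
    intro j hj
    have h1 : b j - e j = ∑ l, W j l * (a l - a' l) := by
      rw [hb]
      simp only [e, Matrix.mulVec, dotProduct, mul_sub, Finset.sum_sub_distrib]
    have h2 : b j * (b j - e j) ≤ 0 := by
      rw [h1, Finset.mul_sum]
      refine Finset.sum_nonpos fun l _ => ?_
      by_cases hl : (l : ℕ) < r
      · simp only [a', hl, if_true, sub_zero]
        obtain ⟨k1, k2⟩ := key j hj l hl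
        have hd : 0 < s l ^ 2 - t j ^ 2 := lt_of_lt_of_le (by positivity) k2
        have : b j * (W j l * a l) * (s l ^ 2 - t j ^ 2) ≤ 0 := by
          have : b j * (W j l * a l) * (s l ^ 2 - t j ^ 2) = - (b j * a l)^2 := by
            linear_combination (- b j * a l) * hrel j l
          rw [this]
          nlinarith [sq_nonneg (b j * a l)]
        by_contra hh
        push Not at hh
        nlinarith [mul_pos hh hd]
      · simp [a', hl]
    nlinarith [sq_nonneg (b j - e j)]
  have hpt : ∀ j l : Fin p, (if r ≤ (j : ℕ) ∧ (l : ℕ) < r then W j l ^ 2 else 0) ≤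
      e j ^ 2 * (4 / g ^ 2 * (if (l : ℕ) < r then (a l / s l) ^ 2 else 0)) := by
    intro j l
    split_ifs with h1 h2 h2
    · obtain ⟨hj, hl⟩ := h1
      obtain ⟨k1, k2⟩ := key j hj l hl
      have hsq : (s l * (g / 2)) ^ 2 ≤ (s l ^ 2 - t j ^ 2) ^ 2 :=
        pow_le_pow_left₀ (by positivity) k2 2
      have h3 : W j l ^ 2 * (s l ^ 2 - t j ^ 2) ^ 2 = (b j * a l) ^ 2 := by
        have : W j l * (s l ^ 2 - t j ^ 2) = - (b j * a l) := by linear_combination - hrel j l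
        rw [← mul_pow, this]; ring
      have h4 : W j l ^ 2 * (s l * (g / 2)) ^ 2 ≤ e j ^ 2 * a l ^ 2 := by
        calc _ ≤ W j l ^ 2 * (s l ^ 2 - t j ^ 2) ^ 2 := by gcongr
          _ = b j ^ 2 * a l ^ 2 := by rw [h3]; ring
          _ ≤ _ := by gcongr ?_ * _; exact hbe j hj
      have h5 : e j ^ 2 * (4 / g ^ 2 * (a l / s l) ^ 2) = e j ^ 2 * a l ^ 2 / (s l * (g / 2)) ^ 2 := by
        field_simp
        norm_num
        ring
      rw [h5, le_div_iff₀ (by positivity)]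
      exact h4
    · exact absurd h1.2 h2
    · positivity
    · simp
  calc _ ≤ ∑ j : Fin p, ∑ l : Fin p, e j ^ 2 * (4 / g ^ 2 * (if (l : ℕ) < r then (a l / s l) ^ 2 else 0)) :=
        Finset.sum_le_sum fun j _ => Finset.sum_le_sum fun l _ => hpt j l
    _ = _ := by
      simp_rw [← Finset.mul_sum]
      rw [← Finset.sum_mul, he]
      ring

def indm (p r : ℕ) : Matrix (Fin p) (Fin p) ℝ :=
  Matrix.diagonal fun l : Fin p => if (l : ℕ) < r then 1 else 0

lemma aux_projr {p : ℕ} (U : Matrix (Fin p) (Fin p) ℝ) (r : ℕ) :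
    projr U r = U * indm p r * Uᵀ := by
  ext i j
  simp only [projr, indm, Matrix.of_apply]
  rw [Matrix.mul_apply]
  simp only [Matrix.mul_diagonal, Matrix.transpose_apply]
  refine Finset.sum_congr rfl fun l _ => ?_
  split_ifs <;> simp

lemma aux_gram {p n : ℕ} {A : Matrix (Fin p) (Fin n) ℝ} (D : SVDData p n A) :
    A * Aᵀ = D.U * Matrix.diagonal (fun l : Fin p => D.sv l ^ 2) * D.Uᵀ := by
  set S : Matrix (Fin p) (Fin n) ℝ :=
    Matrix.of fun (i : Fin p) (j : Fin n) => if (i : ℕ) = (j : ℕ) then D.sv (i : ℕ) else 0 with hS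
  have hdec : A = D.U * S * D.Vᵀ := D.decomp
  have hSS : S * Sᵀ = Matrix.diagonal (fun l : Fin p => D.sv l ^ 2) := by
    ext i k
    simp only [Matrix.mul_apply, Matrix.transpose_apply, hS, Matrix.of_apply, Matrix.diagonal_apply]
    by_cases hi : (i : ℕ) < n
    · rw [Finset.sum_eq_single (⟨i, hi⟩ : Fin n)]
      · by_cases hik : i = k
        · subst hik; simp [sq]
        · have : (k : ℕ) ≠ i := fun h => hik (Fin.ext h.symm)
          simp [hik, this]
      · intro j _ hj
        have : (i : ℕ) ≠ j := fun h => hj (Fin.ext h.symm)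
        simp [this]
      · simp
    · rw [Finset.sum_eq_zero]
      · rw [D.sv_zero i (by omega)]; simp
      · intro j _
        have : (i : ℕ) ≠ j := by omega
        simp [this]
  calc A * Aᵀ = (D.U * S * D.Vᵀ) * (D.U * S * D.Vᵀ)ᵀ := by rw [← hdec]
    _ = D.U * (S * ((D.Vᵀ * D.V) * Sᵀ)) * D.Uᵀ := by
        simp only [Matrix.transpose_mul, Matrix.transpose_transpose, Matrix.mul_assoc]
    _ = _ := by rw [D.hV, Matrix.one_mul, hSS]

lemma aux_frob {p : ℕ} (A : Matrix (Fin p) (Fin p) ℝ) :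
    ∑ i, ∑ j, A i j ^ 2 = Matrix.trace (A * Aᵀ) := by
  simp [Matrix.trace, Matrix.mul_apply, sq]

lemma aux_frob_inv {p : ℕ} (A Q R : Matrix (Fin p) (Fin p) ℝ) (hQ : Q * Qᵀ = 1) (hR : R * Rᵀ = 1) :
    ∑ i, ∑ j, A i j ^ 2 = ∑ i, ∑ j, (Qᵀ * A * R) i j ^ 2 := by
  rw [aux_frob, aux_frob]
  have : Qᵀ * A * R * (Qᵀ * A * R)ᵀ = Qᵀ * (A * ((R * Rᵀ) * Aᵀ)) * Q := by
    simp only [Matrix.transpose_mul, Matrix.transpose_transpose, Matrix.mul_assoc]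
  rw [this, hR, Matrix.one_mul, Matrix.trace_mul_comm _ Q, ← Matrix.mul_assoc, hQ, Matrix.one_mul]

lemma aux_count {p r : ℕ} (W : Matrix (Fin p) (Fin p) ℝ) (hW : Wᵀ * W = 1) (hW2 : W * Wᵀ = 1) :
    ∑ j, ∑ l, ((indm p r) * W - W * (indm p r)) j l ^ 2 =
      2 * ∑ j : Fin p, ∑ l : Fin p, (if r ≤ (j : ℕ) ∧ (l : ℕ) < r then W j l ^ 2 else 0) := by
  have hcol : ∀ l, ∑ j, W j l ^ 2 = 1 := by
    intro l
    have := congrFun (congrFun hW l) l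
    simpa [Matrix.mul_apply, sq] using this
  have hrow : ∀ j, ∑ l, W j l ^ 2 = 1 := by
    intro l
    have := congrFun (congrFun hW2 l) l
    simpa [Matrix.mul_apply, sq] using this
  have h1 : ∑ j : Fin p, ∑ l : Fin p, (if (j : ℕ) < r then W j l ^ 2 else 0) =
      ∑ j : Fin p, if (j : ℕ) < r then (1 : ℝ) else 0 := by
    refine Finset.sum_congr rfl fun j _ => ?_
    split_ifs
    · exact hrow j
    · simp
  have h2 : ∑ j : Fin p, ∑ l : Fin p, (if (l : ℕ) < r then W j l ^ 2 else 0) =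
      ∑ j : Fin p, if (j : ℕ) < r then (1 : ℝ) else 0 := by
    rw [Finset.sum_comm]
    refine Finset.sum_congr rfl fun j _ => ?_
    split_ifs
    · exact hcol j
    · simp
  have h3 : ∑ j, ∑ l, ((indm p r) * W - W * (indm p r)) j l ^ 2 =
      ∑ j : Fin p, ∑ l : Fin p, ((if (j : ℕ) < r then W j l ^ 2 else 0)
        - (if (l : ℕ) < r then W j l ^ 2 else 0) +
        2 * (if r ≤ (j : ℕ) ∧ (l : ℕ) < r then W j l ^ 2 else 0)) := by
    refine Finset.sum_congr rfl fun j _ => Finset.sum_congr rfl fun l _ => ?_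
    simp only [indm, Matrix.sub_apply, Matrix.diagonal_mul, Matrix.mul_diagonal]
    by_cases hj : (j : ℕ) < r <;> by_cases hl : (l : ℕ) < r <;>
      simp [hj, hl, not_le.2, not_lt.1] <;> (try simp [not_lt.1 hj]) <;> ring
  rw [h3]
  simp only [Finset.sum_add_distrib, Finset.sum_sub_distrib, h1, h2, ← Finset.mul_sum]
  ring

/-- **Theorem 1 (leave-one-out singular subspace perturbation).**
`Y ∈ ℝ^{p×n}` is `Ŷ ∈ ℝ^{p×(n+1)}` with its last column `y` removed.  If the spectral gap
condition `σ_r − σ_{r+1} > 2‖(I − U_r U_rᵀ) y‖` holds, then for any choice of leading-`r`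
orthonormal left singular vectors `Û_r` of `Ŷ`,
`‖Û_r Û_rᵀ − U_r U_rᵀ‖_F ≤ 4√2 (‖(I − U_r U_rᵀ) y‖/(σ_r − σ_{r+1})) √(Σ_{i=1}^r (u_iᵀ y/σ_i)²)`. -/
theorem leave_one_out_perturbation
    (p n : ℕ) (Yhat : Matrix (Fin p) (Fin (n + 1)) ℝ)
    (Y : Matrix (Fin p) (Fin n) ℝ) (y : Fin p → ℝ)
    (hY : ∀ i j, Y i j = Yhat i (Fin.castSucc j))
    (hy : ∀ i, y i = Yhat i (Fin.last n))
    (r : ℕ) (hr0 : 0 < r) (hr : r ≤ min p n)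
    (D : SVDData p n Y) (Dh : SVDData p (n + 1) Yhat)
    (hgap : 2 * vnorm (y - (projr D.U r).mulVec y) < D.sv (r - 1) - D.sv r) :
    fnorm (projr Dh.U r - projr D.U r) ≤
      4 * Real.sqrt 2 *
        (vnorm (y - (projr D.U r).mulVec y) / (D.sv (r - 1) - D.sv r)) *
        Real.sqrt (∑ l ∈ Finset.range r, ((∑ j, matCol D.U l j * y j) / D.sv l) ^ 2)
    := by
  have hU := D.hU
  have hU' : D.U * D.Uᵀ = 1 := mul_eq_one_comm.1 hU
  have hH := Dh.hU
  have hH' : Dh.U * Dh.Uᵀ = 1 := mul_eq_one_comm.1 hH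
  set W := Dh.Uᵀ * D.U with hWdef
  have hW : Wᵀ * W = 1 := by
    calc Wᵀ * W = D.Uᵀ * ((Dh.U * Dh.Uᵀ) * D.U) := by
          simp only [hWdef, Matrix.transpose_mul, Matrix.transpose_transpose, Matrix.mul_assoc]
      _ = 1 := by rw [hH', Matrix.one_mul, hU]
  have hW2 : W * Wᵀ = 1 := mul_eq_one_comm.1 hW
  set a := D.Uᵀ *ᵥ y with ha
  set b := Dh.Uᵀ *ᵥ y with hbdef
  have hb : b = W *ᵥ a := by
    rw [ha, hbdef, hWdef, Matrix.mulVec_mulVec, Matrix.mul_assoc, hU', Matrix.mul_one]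
  have hgram : Yhat * Yhatᵀ = Y * Yᵀ + Matrix.vecMulVec y y := by
    ext i k
    simp [Matrix.mul_apply, Matrix.vecMulVec_apply, Fin.sum_univ_castSucc, hY, hy]
  have hrel : ∀ j l : Fin p, Dh.sv j ^ 2 * W j l = W j l * D.sv l ^ 2 + b j * a l := by
    have hm : Matrix.diagonal (fun l : Fin p => Dh.sv l ^ 2) * W =
        W * Matrix.diagonal (fun l : Fin p => D.sv l ^ 2) + Matrix.vecMulVec b a := by
      have h1 : Dh.Uᵀ * (Yhat * Yhatᵀ) * D.U = Matrix.diagonal (fun l : Fin p => Dh.sv l ^ 2) * W := by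
        rw [aux_gram Dh]
        calc _ = (Dh.Uᵀ * Dh.U) * (Matrix.diagonal (fun l : Fin p => Dh.sv l ^ 2) * (Dh.Uᵀ * D.U)) := by
              simp only [Matrix.mul_assoc]
          _ = _ := by rw [hH, Matrix.one_mul]
      have h2 : Dh.Uᵀ * (Y * Yᵀ) * D.U = W * Matrix.diagonal (fun l : Fin p => D.sv l ^ 2) := by
        rw [aux_gram D]
        calc _ = (Dh.Uᵀ * D.U) * (Matrix.diagonal (fun l : Fin p => D.sv l ^ 2) * (D.Uᵀ * D.U)) := by
              simp only [Matrix.mul_assoc]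
          _ = _ := by rw [hU, Matrix.mul_one]
      have h3 : Dh.Uᵀ * Matrix.vecMulVec y y * D.U = Matrix.vecMulVec b a := by
        rw [Matrix.mul_vecMulVec, Matrix.vecMulVec_mul, ha, Matrix.mulVec_transpose D.U]
      rw [← h1, ← h2, ← h3, hgram, Matrix.mul_add, Matrix.add_mul]
    intro j l
    have := congrFun (congrFun hm j) l
    simpa [Matrix.diagonal_mul, Matrix.mul_diagonal, Matrix.vecMulVec_apply] using this
  set w := vnorm (y - (projr D.U r).mulVec y) with hwdef
  have hw0 : 0 ≤ w := Real.sqrt_nonneg _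
  have hw : w ^ 2 = ∑ l : Fin p, if (l : ℕ) < r then 0 else a l ^ 2 := by
    rw [hwdef, vnorm, Real.sq_sqrt (Finset.sum_nonneg fun _ _ => sq_nonneg _)]
    set z := y - (projr D.U r).mulVec y with hz
    have h1 : D.Uᵀ *ᵥ z = fun l : Fin p => if (l : ℕ) < r then 0 else a l := by
      have : D.Uᵀ *ᵥ z = a - (indm p r) *ᵥ a := by
        rw [hz, Matrix.mulVec_sub, aux_projr, Matrix.mulVec_mulVec, ← Matrix.mul_assoc,
          ← Matrix.mul_assoc, hU, Matrix.one_mul, ← Matrix.mulVec_mulVec]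
      rw [this]
      ext l
      simp only [indm, Pi.sub_apply, Matrix.mulVec_diagonal]
      split_ifs <;> simp
    have h2 : (D.Uᵀ *ᵥ z) ⬝ᵥ (D.Uᵀ *ᵥ z) = z ⬝ᵥ z := by
      rw [Matrix.dotProduct_mulVec, ← Matrix.mulVec_transpose, Matrix.transpose_transpose,
        Matrix.mulVec_mulVec, hU', Matrix.one_mulVec]
    calc _ = z ⬝ᵥ z := Finset.sum_congr rfl fun l _ => by ring
      _ = _ := by
        rw [← h2, h1]
        exact Finset.sum_congr rfl fun l _ => by by_cases hl : (l : ℕ) < r <;> simp [hl, sq]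
  have hmain := aux_main hr0 W hW hW2 a b D.sv Dh.sv D.sv_anti D.sv_nonneg Dh.sv_anti Dh.sv_nonneg
    hb hrel w hw0 hw hgap
  have hsum : ∑ l ∈ Finset.range r, ((∑ j, matCol D.U l j * y j) / D.sv l) ^ 2 =
      ∑ l : Fin p, if (l : ℕ) < r then (a l / D.sv l) ^ 2 else 0 := by
    have hrp : r ≤ p := le_trans hr (min_le_left _ _)
    have h1 : Finset.range r = (Finset.range p).filter (· < r) := by
      ext x; simp; omega
    rw [h1, Finset.sum_filter, Finset.sum_range]
    refine Finset.sum_congr rfl fun l _ => ?_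
    simp [matCol, ha, Matrix.mulVec, dotProduct]
  have hf : ∑ i, ∑ j, (projr Dh.U r - projr D.U r) i j ^ 2 =
      2 * ∑ j : Fin p, ∑ l : Fin p, (if r ≤ (j : ℕ) ∧ (l : ℕ) < r then W j l ^ 2 else 0) := by
    rw [← aux_count W hW hW2, aux_frob_inv _ Dh.U D.U hH' hU']
    have : Dh.Uᵀ * (projr Dh.U r - projr D.U r) * D.U = indm p r * W - W * indm p r := by
      rw [aux_projr, aux_projr, Matrix.mul_sub, Matrix.sub_mul]
      congr 1
      · calc _ = (Dh.Uᵀ * Dh.U) * (indm p r * (Dh.Uᵀ * D.U)) := by simp only [Matrix.mul_assoc]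
          _ = _ := by rw [hH, Matrix.one_mul]
      · calc _ = (Dh.Uᵀ * D.U) * (indm p r * (D.Uᵀ * D.U)) := by simp only [Matrix.mul_assoc]
          _ = _ := by rw [hU, Matrix.mul_one]
    rw [this]
  rw [hsum, fnorm, hf]
  set g := D.sv (r - 1) - D.sv r with hg
  set S := ∑ l : Fin p, if (l : ℕ) < r then (a l / D.sv l) ^ 2 else 0 with hS
  have hS0 : 0 ≤ S := Finset.sum_nonneg fun _ _ => by split_ifs <;> positivity
  have hg0 : 0 < g := by linarith
  apply Real.sqrt_le_iff.2
  refine ⟨by positivity, ?_⟩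
  have e1 : (4 * √2 * (w / g) * √S) ^ 2 = 32 * (w ^ 2 / g ^ 2 * S) := by
    rw [mul_pow, mul_pow, mul_pow, Real.sq_sqrt hS0, Real.sq_sqrt (by norm_num), div_pow]; ring
  have e2 : 4 * w ^ 2 / g ^ 2 * S = 4 * (w ^ 2 / g ^ 2 * S) := by ring
  have e3 : 0 ≤ w ^ 2 / g ^ 2 * S := by positivity
  rw [e1]
  rw [e2] at hmain
  linarith
end
end

section
/- Assume βn/k² ≥ 10 and λ_κ > 16‖E‖. Then for every i ∈ [n], ‖Û_{1:κ} Û_{1:κ}ᵀ − Û_{−i,1:κ} Û_{−i,1:κ}ᵀ‖_F ≤ (128‖E‖/λ_κ) · ( √(kκ/(βn)) + ‖Û_{−i,1:κ} Û_{−i,1:κ}ᵀ ε_i‖ / λ_κ ). -/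
open Matrix MeasureTheory ProbabilityTheory
open scoped BigOperators ENNReal NNReal

noncomputable section

theorem vnorm_eq {p : ℕ} (x : Fin p → ℝ) : vnorm x = ‖(WithLp.toLp 2 x : EuclideanSpace ℝ (Fin p))‖ := by
  rw [EuclideanSpace.norm_eq]; simp [vnorm]

theorem vnorm_nonneg {p : ℕ} (x : Fin p → ℝ) : 0 ≤ vnorm x := Real.sqrt_nonneg _

theorem vnorm_sq {p : ℕ} (x : Fin p → ℝ) : vnorm x ^ 2 = ∑ i, x i ^ 2 :=
  Real.sq_sqrt (Finset.sum_nonneg fun _ _ => sq_nonneg _)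

theorem vnorm_add_le {p : ℕ} (x y : Fin p → ℝ) : vnorm (x + y) ≤ vnorm x + vnorm y := by
  simp only [vnorm_eq, WithLp.toLp_add]; exact norm_add_le _ _

theorem vnorm_neg {p : ℕ} (x : Fin p → ℝ) : vnorm (-x) = vnorm x := by
  simp [vnorm]

theorem vnorm_sq_dot {p : ℕ} (x : Fin p → ℝ) : vnorm x ^ 2 = x ⬝ᵥ x := by
  rw [vnorm_sq]; simp [dotProduct, sq]

theorem dot_le_vnorm {p : ℕ} (x y : Fin p → ℝ) : x ⬝ᵥ y ≤ vnorm x * vnorm y := by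
  unfold vnorm dotProduct
  exact Real.sum_mul_le_sqrt_mul_sqrt _ _ _

theorem vnorm_mulVec_le {m n : ℕ} (A : Matrix (Fin m) (Fin n) ℝ) (v : Fin n → ℝ) :
    vnorm (A *ᵥ v) ≤ opnorm A * vnorm v := by
  rw [vnorm_eq, vnorm_eq]
  have := (LinearMap.toContinuousLinearMap (Matrix.toEuclideanLin A)).le_opNorm (WithLp.toLp 2 v)
  simpa [opnorm] using this

theorem opnorm_nonneg {m n : ℕ} (A : Matrix (Fin m) (Fin n) ℝ) : 0 ≤ opnorm A := norm_nonneg _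

theorem vnorm_transpose_le {m n : ℕ} (A : Matrix (Fin m) (Fin n) ℝ) (v : Fin m → ℝ) :
    vnorm (Aᵀ *ᵥ v) ≤ opnorm A * vnorm v := by
  have h1 : vnorm (Aᵀ *ᵥ v) ^ 2 = v ⬝ᵥ (A *ᵥ (Aᵀ *ᵥ v)) := by
    rw [vnorm_sq_dot, Matrix.dotProduct_mulVec v, Matrix.mulVec_transpose]
  have h2 := dot_le_vnorm v (A *ᵥ (Aᵀ *ᵥ v))
  have h3 := vnorm_mulVec_le A (Aᵀ *ᵥ v)
  have h4 := vnorm_nonneg (Aᵀ *ᵥ v)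
  have h5 := vnorm_nonneg v
  rcases h4.eq_or_lt with h | h
  · rw [← h]; exact mul_nonneg (opnorm_nonneg A) h5
  · have := mul_le_mul_of_nonneg_left h3 h5
    nlinarith

theorem svd_gram {p n : ℕ} {A : Matrix (Fin p) (Fin n) ℝ} (D : SVDData p n A) :
    A * Aᵀ = D.U * diagonal (fun l : Fin p => D.sv l ^ 2) * D.Uᵀ := by
  set S : Matrix (Fin p) (Fin n) ℝ := Matrix.of fun (i : Fin p) (j : Fin n) =>
    if (i : ℕ) = (j : ℕ) then D.sv (i : ℕ) else 0 with hS
  have hd : A = D.U * S * D.Vᵀ := D.decomp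
  have hSS : S * Sᵀ = diagonal (fun l : Fin p => D.sv l ^ 2) := by
    ext a b
    rw [Matrix.mul_apply, Matrix.diagonal_apply]
    simp only [hS, Matrix.of_apply, Matrix.transpose_apply]
    by_cases hab : a = b
    · subst hab
      simp only [if_true]
      by_cases han : (a : ℕ) < n
      · rw [Finset.sum_eq_single (⟨a, han⟩ : Fin n)]
        · simp [sq]
        · intro j _ hj
          have : (a : ℕ) ≠ j := fun h => hj (Fin.ext h.symm)
          simp [this]
        · simp
      · have : D.sv a = 0 := D.sv_zero _ (by omega)
        simp [this]
    · rw [if_neg hab]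
      apply Finset.sum_eq_zero
      intro j _
      have : (a : ℕ) ≠ b := fun h => hab (Fin.ext h)
      by_cases h1 : (a : ℕ) = j
      · have : (b : ℕ) ≠ j := by omega
        simp [this]
      · simp [h1]
  calc A * Aᵀ = (D.U * S * D.Vᵀ) * (D.U * S * D.Vᵀ)ᵀ := by rw [← hd]
    _ = D.U * S * (D.Vᵀ * D.V) * Sᵀ * D.Uᵀ := by
      simp only [Matrix.transpose_mul, Matrix.transpose_transpose, Matrix.mul_assoc]
    _ = _ := by rw [D.hV, Matrix.mul_one, Matrix.mul_assoc D.U, hSS]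

theorem orth_right {p : ℕ} {U : Matrix (Fin p) (Fin p) ℝ} (h : Uᵀ * U = 1) : U * Uᵀ = 1 :=
  mul_eq_one_comm.mp h

theorem vnorm_orth {p : ℕ} {U : Matrix (Fin p) (Fin p) ℝ} (h : Uᵀ * U = 1) (u : Fin p → ℝ) :
    vnorm (U *ᵥ u) = vnorm u := by
  have : vnorm (U *ᵥ u) ^ 2 = vnorm u ^ 2 := by
    rw [vnorm_sq_dot, vnorm_sq_dot, Matrix.dotProduct_mulVec, ← Matrix.mulVec_transpose,
      Matrix.mulVec_mulVec, h, Matrix.one_mulVec]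
  exact (sq_eq_sq₀ (vnorm_nonneg _) (vnorm_nonneg _)).mp this

theorem svd_vnorm_sq {p n : ℕ} {A : Matrix (Fin p) (Fin n) ℝ} (D : SVDData p n A) (u : Fin p → ℝ) :
    vnorm (Aᵀ *ᵥ u) ^ 2 = ∑ l : Fin p, D.sv l ^ 2 * (D.Uᵀ *ᵥ u) l ^ 2 := by
  have h1 : vnorm (Aᵀ *ᵥ u) ^ 2 = u ⬝ᵥ ((A * Aᵀ) *ᵥ u) := by
    rw [vnorm_sq_dot, ← Matrix.mulVec_mulVec, Matrix.dotProduct_mulVec u A, Matrix.mulVec_transpose]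
  rw [h1, svd_gram D, ← Matrix.mulVec_mulVec, ← Matrix.mulVec_mulVec, Matrix.dotProduct_mulVec,
    ← Matrix.mulVec_transpose]
  simp only [dotProduct, Matrix.mulVec_diagonal]
  refine Finset.sum_congr rfl fun l _ => by ring

theorem orth_vnorm_sq {p : ℕ} {U : Matrix (Fin p) (Fin p) ℝ} (h : Uᵀ * U = 1) (u : Fin p → ℝ) :
    vnorm u ^ 2 = ∑ l : Fin p, (Uᵀ *ᵥ u) l ^ 2 := by
  rw [← vnorm_sq, vnorm_orth]; simpa using orth_right h

theorem svd_lower {p n : ℕ} {A : Matrix (Fin p) (Fin n) ℝ} (D : SVDData p n A) (u : Fin p → ℝ)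
    (r : ℕ) (h : ∀ l : Fin p, r < l → (D.Uᵀ *ᵥ u) l = 0) :
    D.sv r * vnorm u ≤ vnorm (Aᵀ *ᵥ u) := by
  apply le_of_sq_le_sq _ (vnorm_nonneg _)
  rw [mul_pow, svd_vnorm_sq D, orth_vnorm_sq D.hU, Finset.mul_sum]
  apply Finset.sum_le_sum
  intro l _
  by_cases hl : r < l
  · simp [h l hl]
  · have := D.sv_anti l r (by omega)
    have h0 := D.sv_nonneg r
    gcongr

theorem svd_upper {p n : ℕ} {A : Matrix (Fin p) (Fin n) ℝ} (D : SVDData p n A) (u : Fin p → ℝ)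
    (r : ℕ) (h : ∀ l : Fin p, (l : ℕ) < r → (D.Uᵀ *ᵥ u) l = 0) :
    vnorm (Aᵀ *ᵥ u) ≤ D.sv r * vnorm u := by
  apply le_of_sq_le_sq _ (mul_nonneg (D.sv_nonneg _) (vnorm_nonneg _))
  rw [mul_pow, svd_vnorm_sq D, orth_vnorm_sq D.hU, Finset.mul_sum]
  apply Finset.sum_le_sum
  intro l _
  by_cases hl : (l : ℕ) < r
  · simp [h l hl]
  · have := D.sv_anti r l (by omega)
    have h0 := D.sv_nonneg l
    gcongr

theorem exists_inter {p : ℕ} (U W : Matrix (Fin p) (Fin p) ℝ) (r : ℕ) (hr : r < p) :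
    ∃ u : Fin p → ℝ, 0 < vnorm u ∧ (∀ l : Fin p, r < l → (Uᵀ *ᵥ u) l = 0) ∧
      (∀ l : Fin p, (l : ℕ) < r → (Wᵀ *ᵥ u) l = 0) := by
  let M : Matrix (Fin p) (Fin p) ℝ := fun l =>
    if (l : ℕ) < r then Wᵀ l else if r < l then Uᵀ l else 0
  have hdet : M.det = 0 := by
    apply Matrix.det_eq_zero_of_row_eq_zero ⟨r, hr⟩
    intro j; simp [M]
  obtain ⟨u, hu, hMu⟩ := Matrix.exists_mulVec_eq_zero_iff.mpr hdet
  refine ⟨u, ?_, ?_, ?_⟩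
  · rw [vnorm_eq, norm_pos_iff]
    intro h; apply hu
    simpa using h
  · intro l hl
    have := congrFun hMu l
    have h2 : ¬ (l : ℕ) < r := by omega
    simpa [Matrix.mulVec, M, hl, h2] using this
  · intro l hl
    have := congrFun hMu l
    simpa [Matrix.mulVec, M, hl] using this

theorem projr_eq {p : ℕ} (U : Matrix (Fin p) (Fin p) ℝ) (r : ℕ) :
    projr U r = U * diagonal (fun l : Fin p => if (l : ℕ) < r then (1 : ℝ) else 0) * Uᵀ := by
  ext a b
  rw [Matrix.mul_apply]
  simp only [projr, Matrix.of_apply, Matrix.mul_diagonal, Matrix.transpose_apply]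
  refine Finset.sum_congr rfl fun l _ => ?_
  split_ifs <;> simp

theorem projr_vnorm_sq {p : ℕ} {U : Matrix (Fin p) (Fin p) ℝ} (h : Uᵀ * U = 1) (r : ℕ)
    (v : Fin p → ℝ) :
    vnorm (projr U r *ᵥ v) ^ 2 = ∑ l : Fin p, if (l : ℕ) < r then (Uᵀ *ᵥ v) l ^ 2 else 0 := by
  rw [projr_eq, ← Matrix.mulVec_mulVec, ← Matrix.mulVec_mulVec, vnorm_orth h, vnorm_sq]
  refine Finset.sum_congr rfl fun l _ => ?_
  rw [Matrix.mulVec_diagonal]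
  split_ifs <;> simp

theorem fnorm_nonneg {m n : ℕ} (A : Matrix (Fin m) (Fin n) ℝ) : 0 ≤ fnorm A := Real.sqrt_nonneg _

theorem fnorm_sq {m n : ℕ} (A : Matrix (Fin m) (Fin n) ℝ) :
    fnorm A ^ 2 = ∑ i, ∑ j, (A i j) ^ 2 :=
  Real.sq_sqrt (Finset.sum_nonneg fun _ _ => Finset.sum_nonneg fun _ _ => sq_nonneg _)

theorem vnorm_le_fnorm {m n : ℕ} (A : Matrix (Fin m) (Fin n) ℝ) (v : Fin n → ℝ) :
    vnorm (A *ᵥ v) ≤ fnorm A * vnorm v := by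
  refine le_of_sq_le_sq ?_ (mul_nonneg (fnorm_nonneg _) (vnorm_nonneg _))
  rw [mul_pow, fnorm_sq, vnorm_sq, vnorm_sq, Finset.sum_mul]
  apply Finset.sum_le_sum
  intro i _
  exact Finset.sum_mul_sq_le_sq_mul_sq Finset.univ (fun j => A i j) v

theorem fnorm_proj_sub {p : ℕ} {U W : Matrix (Fin p) (Fin p) ℝ} (hU : Uᵀ * U = 1)
    (hW : Wᵀ * W = 1) (r : ℕ) :
    fnorm (projr U r - projr W r) ^ 2 =
      2 * ∑ j : Fin p, if (j : ℕ) < r then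
        (∑ l : Fin p, if (l : ℕ) < r then 0 else (Wᵀ * U) l j ^ 2) else 0 := by
  set d : Fin p → ℝ := fun l => if (l : ℕ) < r then (1 : ℝ) else 0 with hd
  have hdd : diagonal d * diagonal d = diagonal d := by
    rw [Matrix.diagonal_mul_diagonal]; congr 1; ext l; simp [hd]
  have htr : ∀ {V : Matrix (Fin p) (Fin p) ℝ}, Vᵀ * V = 1 →
      trace ((V * diagonal d * Vᵀ) * (V * diagonal d * Vᵀ)) = ∑ l, d l := by
    intro V hV
    have : (V * diagonal d * Vᵀ) * (V * diagonal d * Vᵀ) =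
        V * diagonal d * (Vᵀ * V) * diagonal d * Vᵀ := by simp only [Matrix.mul_assoc]
    rw [this, hV, Matrix.mul_one, Matrix.mul_assoc V, hdd, Matrix.trace_mul_comm, ← Matrix.mul_assoc,
      hV, Matrix.one_mul, Matrix.trace_diagonal]
  have hcross : trace ((U * diagonal d * Uᵀ) * (W * diagonal d * Wᵀ)) =
      ∑ j, ∑ l, d j * d l * (Wᵀ * U) l j ^ 2 := by
    have : (U * diagonal d * Uᵀ) * (W * diagonal d * Wᵀ) =
        U * (diagonal d * (Wᵀ * U)ᵀ * diagonal d * Wᵀ) := by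
      simp only [Matrix.mul_assoc, Matrix.transpose_mul, Matrix.transpose_transpose]
    rw [this, Matrix.trace_mul_comm, Matrix.mul_assoc _ Wᵀ U, Matrix.trace]
    refine Finset.sum_congr rfl fun j _ => ?_
    rw [Matrix.diag_apply, Matrix.mul_apply]
    refine Finset.sum_congr rfl fun l _ => ?_
    rw [Matrix.mul_diagonal, Matrix.diagonal_mul, Matrix.transpose_apply]
    ring
  have hsym : ∀ V : Matrix (Fin p) (Fin p) ℝ, (projr V r)ᵀ = projr V r := by
    intro V; ext a b; simp [projr, mul_comm]
  have h1 : fnorm (projr U r - projr W r) ^ 2 =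
      trace ((projr U r - projr W r) * (projr U r - projr W r)) := by
    have : (projr U r - projr W r) * (projr U r - projr W r) =
      (projr U r - projr W r) * (projr U r - projr W r)ᵀ := by
      rw [Matrix.transpose_sub, hsym, hsym]
    rw [this, fnorm_sq, Matrix.trace]
    refine Finset.sum_congr rfl fun j _ => ?_
    rw [Matrix.diag_apply, Matrix.mul_apply]
    refine Finset.sum_congr rfl fun l _ => ?_
    rw [Matrix.transpose_apply, sq]
  have hcol : ∀ j, ∑ l, (Wᵀ * U) l j ^ 2 = 1 := by
    intro j
    have h2 : (Wᵀ * U)ᵀ * (Wᵀ * U) = 1 := by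
      have : (Wᵀ * U)ᵀ * (Wᵀ * U) = Uᵀ * (W * Wᵀ) * U := by
        simp only [Matrix.mul_assoc, Matrix.transpose_mul, Matrix.transpose_transpose]
      rw [this, orth_right hW, Matrix.mul_one, hU]
    have := congrFun (congrFun h2 j) j
    rw [Matrix.mul_apply, Matrix.one_apply_eq] at this
    rw [← this]
    refine Finset.sum_congr rfl fun l _ => ?_
    rw [Matrix.transpose_apply, sq]
  rw [h1, projr_eq, projr_eq]
  rw [Matrix.sub_mul, Matrix.mul_sub, Matrix.mul_sub, Matrix.trace_sub, Matrix.trace_sub,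
    Matrix.trace_sub, htr hU, htr hW, Matrix.trace_mul_comm (W * _ * _), hcross]
  have h3 : ∑ j : Fin p, (if (j : ℕ) < r then
        (∑ l : Fin p, if (l : ℕ) < r then 0 else (Wᵀ * U) l j ^ 2) else 0)
      = ∑ j, d j - ∑ j, ∑ l, d j * d l * (Wᵀ * U) l j ^ 2 := by
    rw [← Finset.sum_sub_distrib]
    refine Finset.sum_congr rfl fun j _ => ?_
    have : d j = ∑ l, d j * (Wᵀ * U) l j ^ 2 := by rw [← Finset.mul_sum, hcol, mul_one]
    have h4 : d j - ∑ l, d j * d l * (Wᵀ * U) l j ^ 2 =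
        ∑ l, (d j * (Wᵀ * U) l j ^ 2 - d j * d l * (Wᵀ * U) l j ^ 2) := by
      rw [Finset.sum_sub_distrib, ← this]
    rw [h4]
    by_cases hj : (j : ℕ) < r
    · rw [if_pos hj]
      refine Finset.sum_congr rfl fun l _ => ?_
      by_cases hl : (l : ℕ) < r <;> simp [hd, hj, hl]
    · simp [hd, hj]
  rw [h3]; ring

theorem sub_vnorm_sq {p n : ℕ} (M : Matrix (Fin p) (Fin (n + 1)) ℝ) (i : Fin (n + 1))
    (u : Fin p → ℝ) :
    vnorm (Mᵀ *ᵥ u) ^ 2 = (Mᵀ *ᵥ u) i ^ 2 + vnorm ((M.submatrix id i.succAbove)ᵀ *ᵥ u) ^ 2 := by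
  rw [vnorm_sq, vnorm_sq, Fin.sum_univ_succAbove _ i]
  rfl

theorem sub_vnorm_le {p n : ℕ} (M : Matrix (Fin p) (Fin (n + 1)) ℝ) (i : Fin (n + 1))
    (u : Fin p → ℝ) :
    vnorm ((M.submatrix id i.succAbove)ᵀ *ᵥ u) ≤ vnorm (Mᵀ *ᵥ u) := by
  refine le_of_sq_le_sq ?_ (vnorm_nonneg _)
  rw [sub_vnorm_sq M i]
  nlinarith [sq_nonneg ((Mᵀ *ᵥ u) i)]

theorem weyl_lower {p n : ℕ} {P E X : Matrix (Fin p) (Fin n) ℝ} (hX : X = P + E)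
    (DP : SVDData p n P) (DX : SVDData p n X) (r : ℕ) (hr : r < p) :
    DP.sv r ≤ DX.sv r + opnorm E := by
  obtain ⟨u, hu, h1, h2⟩ := exists_inter DP.U DX.U r hr
  have a := svd_lower DP u r h1
  have b := svd_upper DX u r h2
  have c := vnorm_transpose_le E u
  have d : vnorm (Pᵀ *ᵥ u) ≤ vnorm (Xᵀ *ᵥ u) + vnorm (Eᵀ *ᵥ u) := by
    have : Pᵀ *ᵥ u = Xᵀ *ᵥ u + -(Eᵀ *ᵥ u) := by
      rw [hX, Matrix.transpose_add, Matrix.add_mulVec]; abel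
    rw [this, ← vnorm_neg (Eᵀ *ᵥ u)]
    exact vnorm_add_le _ _
  refine le_of_mul_le_mul_right ?_ hu
  linarith

theorem weyl_upper {p n : ℕ} {P E X : Matrix (Fin p) (Fin (n + 1)) ℝ} (hX : X = P + E)
    (DP : SVDData p (n + 1) P) (i : Fin (n + 1))
    (DY : SVDData p n (X.submatrix id i.succAbove)) (r : ℕ)
    (h0 : DP.sv r = 0) : DY.sv r ≤ opnorm E := by
  by_cases hr : r < p
  · obtain ⟨u, hu, h1, h2⟩ := exists_inter DY.U DP.U r hr
    have a := svd_lower DY u r h1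
    have b := svd_upper DP u r h2
    have c := vnorm_transpose_le E u
    have d : vnorm (Xᵀ *ᵥ u) ≤ vnorm (Pᵀ *ᵥ u) + vnorm (Eᵀ *ᵥ u) := by
      rw [hX, Matrix.transpose_add, Matrix.add_mulVec]
      exact vnorm_add_le _ _
    have f := sub_vnorm_le X i u
    rw [h0] at b
    refine le_of_mul_le_mul_right ?_ hu
    linarith
  · rw [DY.sv_zero r (by omega)]; exact opnorm_nonneg E

theorem cluster_bound {p n k : ℕ} (z : Fin n → Fin k) (θ : Fin k → Fin p → ℝ)
    (Pm : Matrix (Fin p) (Fin n) ℝ) (hP : ∀ a j, Pm a j = θ (z j) a) (c : Fin k) (w : Fin p → ℝ) :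
    ((Finset.univ.filter fun j => z j = c).card : ℝ) * (θ c ⬝ᵥ w) ^ 2 ≤ vnorm (Pmᵀ *ᵥ w) ^ 2 := by
  have hc : ∀ j, (Pmᵀ *ᵥ w) j = θ (z j) ⬝ᵥ w := by
    intro j; simp [Matrix.mulVec, dotProduct, hP]
  rw [vnorm_sq, ← nsmul_eq_mul, ← Finset.sum_const]
  calc _ = ∑ j ∈ Finset.univ.filter (fun j => z j = c), (Pmᵀ *ᵥ w) j ^ 2 := by
        refine Finset.sum_congr rfl fun j hj => ?_
        rw [hc, (Finset.mem_filter.mp hj).2]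
    _ ≤ _ := Finset.sum_le_sum_of_subset_of_nonneg (Finset.filter_subset _ _)
        fun _ _ _ => sq_nonneg _

theorem vnorm_col_le {p n : ℕ} (E : Matrix (Fin p) (Fin n) ℝ) (i : Fin n) :
    vnorm (fun a => E a i) ≤ opnorm E := by
  have := vnorm_mulVec_le E (Pi.single i 1)
  have h1 : E *ᵥ (Pi.single i 1) = fun a => E a i := by
    ext a; simp
  have h2 : vnorm (Pi.single i 1 : Fin n → ℝ) = 1 := by
    unfold vnorm; simp [Pi.single_apply]
  rwa [h1, h2, mul_one] at this

theorem theta_perp {p n k : ℕ} (z : Fin (n + 1) → Fin k) (θ : Fin k → Fin p → ℝ)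
    (Pm E X : Matrix (Fin p) (Fin (n + 1)) ℝ)
    (hP : ∀ a j, Pm a j = θ (z j) a) (hX : X = Pm + E) (κ : ℕ) (i : Fin (n + 1))
    (DY : SVDData p n (X.submatrix id i.succAbove)) (hY : DY.sv κ ≤ opnorm E)
    (hm : (10 : ℝ) ≤ ((Finset.univ.filter fun j => z j = z i).card : ℝ)) :
    ∑ l : Fin p, (if (l : ℕ) < κ then 0 else (DY.Uᵀ *ᵥ θ (z i)) l ^ 2) ≤ 4 / 9 * opnorm E ^ 2 := by
  set f : Fin p → ℝ := fun l => if (l : ℕ) < κ then 0 else (DY.Uᵀ *ᵥ θ (z i)) l with hf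
  set w := DY.U *ᵥ f with hw
  have hWw : DY.Uᵀ *ᵥ w = f := by rw [hw, Matrix.mulVec_mulVec, DY.hU, Matrix.one_mulVec]
  have hwn : vnorm w = vnorm f := vnorm_orth DY.hU f
  have hsum : ∑ l : Fin p, (if (l : ℕ) < κ then 0 else (DY.Uᵀ *ᵥ θ (z i)) l ^ 2) = vnorm w ^ 2 := by
    rw [hwn, vnorm_sq]
    refine Finset.sum_congr rfl fun l _ => ?_
    simp only [hf]; split_ifs <;> simp
  have hdot : θ (z i) ⬝ᵥ w = vnorm w ^ 2 := by
    rw [hwn, vnorm_sq, hw, Matrix.dotProduct_mulVec, ← Matrix.mulVec_transpose, dotProduct]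
    refine Finset.sum_congr rfl fun l _ => ?_
    simp only [hf]; split_ifs
    · simp
    · ring
  have h1 := cluster_bound z θ Pm hP (z i) w
  rw [sub_vnorm_sq Pm i] at h1
  have h2 : (Pmᵀ *ᵥ w) i = θ (z i) ⬝ᵥ w := by simp [Matrix.mulVec, dotProduct, hP]
  rw [h2, hdot] at h1
  have h3 : vnorm ((Pm.submatrix id i.succAbove)ᵀ *ᵥ w) ≤
      vnorm ((X.submatrix id i.succAbove)ᵀ *ᵥ w) + vnorm ((E.submatrix id i.succAbove)ᵀ *ᵥ w) := by
    have : (Pm.submatrix id i.succAbove)ᵀ *ᵥ w =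
      (X.submatrix id i.succAbove)ᵀ *ᵥ w + -((E.submatrix id i.succAbove)ᵀ *ᵥ w) := by
      have h0 : X.submatrix id i.succAbove =
          Pm.submatrix id i.succAbove + E.submatrix id i.succAbove := by rw [hX]; rfl
      rw [h0, Matrix.transpose_add, Matrix.add_mulVec]; abel
    rw [this, ← vnorm_neg ((E.submatrix id i.succAbove)ᵀ *ᵥ w)]
    exact vnorm_add_le _ _
  have h4 := svd_upper DY w κ (by intro l hl; rw [hWw]; simp [hf, hl])
  have h5 := sub_vnorm_le E i w
  have h6 := vnorm_transpose_le E w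
  have h7 := vnorm_nonneg w
  have h8 : vnorm ((Pm.submatrix id i.succAbove)ᵀ *ᵥ w) ≤ 2 * opnorm E * vnorm w := by
    have := mul_le_mul_of_nonneg_right hY h7
    linarith
  have h9 := pow_le_pow_left₀ (vnorm_nonneg _) h8 2
  rw [hsum]
  have h10 : 9 * (vnorm w ^ 2) ^ 2 ≤ 4 * opnorm E ^ 2 * vnorm w ^ 2 := by
    have := mul_le_mul_of_nonneg_right hm (sq_nonneg (vnorm w ^ 2))
    nlinarith
  rcases h7.eq_or_lt with h | h
  · rw [← h]; nlinarith [sq_nonneg (opnorm E)]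
  · have h11 : 0 < vnorm w ^ 2 := by positivity
    have : 9 * vnorm w ^ 2 ≤ 4 * opnorm E ^ 2 := by
      refine le_of_mul_le_mul_right ?_ h11
      nlinarith
    linarith

theorem rank_one_split {p n : ℕ} (X : Matrix (Fin p) (Fin (n + 1)) ℝ) (i : Fin (n + 1)) :
    X * Xᵀ = (X.submatrix id i.succAbove) * (X.submatrix id i.succAbove)ᵀ +
      Matrix.vecMulVec (fun a => X a i) (fun a => X a i) := by
  ext a b
  rw [Matrix.add_apply, Matrix.mul_apply, Matrix.mul_apply, Fin.sum_univ_succAbove _ i, add_comm]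
  simp [Matrix.vecMulVec_apply]

theorem key_eq {p n : ℕ} {X : Matrix (Fin p) (Fin (n + 1)) ℝ} (DX : SVDData p (n + 1) X)
    (i : Fin (n + 1)) (DY : SVDData p n (X.submatrix id i.succAbove)) (l j : Fin p) :
    (DX.sv j ^ 2 - DY.sv l ^ 2) * (DY.Uᵀ * DX.U) l j =
      (DY.Uᵀ *ᵥ fun a => X a i) l * (DX.Uᵀ *ᵥ fun a => X a i) j := by
  have h := rank_one_split X i
  rw [svd_gram DX, svd_gram DY] at h
  have h2 := congrArg (fun M : Matrix (Fin p) (Fin p) ℝ => DY.Uᵀ * M * DX.U) h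
  beta_reduce at h2
  have e1 : DY.Uᵀ * (DX.U * diagonal (fun l : Fin p => DX.sv l ^ 2) * DX.Uᵀ) * DX.U
      = (DY.Uᵀ * DX.U) * diagonal (fun l : Fin p => DX.sv l ^ 2) := by
    calc _ = (DY.Uᵀ * DX.U) * diagonal (fun l : Fin p => DX.sv l ^ 2) * (DX.Uᵀ * DX.U) := by
          simp only [Matrix.mul_assoc]
      _ = _ := by rw [DX.hU, Matrix.mul_one]
  have e2 : DY.Uᵀ * (DY.U * diagonal (fun l : Fin p => DY.sv l ^ 2) * DY.Uᵀ) * DX.U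
      = diagonal (fun l : Fin p => DY.sv l ^ 2) * (DY.Uᵀ * DX.U) := by
    calc _ = (DY.Uᵀ * DY.U) * diagonal (fun l : Fin p => DY.sv l ^ 2) * (DY.Uᵀ * DX.U) := by
          simp only [Matrix.mul_assoc]
      _ = _ := by rw [DY.hU, Matrix.one_mul]
  rw [Matrix.mul_add, Matrix.add_mul, e1, e2, Matrix.mul_vecMulVec, Matrix.vecMulVec_mul] at h2
  have h3 := congrFun (congrFun h2 l) j
  rw [Matrix.add_apply, Matrix.mul_diagonal, Matrix.diagonal_mul, Matrix.vecMulVec_apply,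
    ← Matrix.mulVec_transpose] at h3
  linarith

theorem theta_bound {p n k : ℕ} (z : Fin n → Fin k) (θ : Fin k → Fin p → ℝ)
    (Pm E X : Matrix (Fin p) (Fin n) ℝ)
    (hP : ∀ a j, Pm a j = θ (z j) a) (hX : X = Pm + E) (DX : SVDData p n X) (c : Fin k)
    (j : Fin p) :
    ((Finset.univ.filter fun j => z j = c).card : ℝ) * (DX.Uᵀ *ᵥ θ c) j ^ 2 ≤
      (DX.sv j + opnorm E) ^ 2 := by
  set u := DX.U *ᵥ (Pi.single j 1) with hu
  have hUu : DX.Uᵀ *ᵥ u = Pi.single j 1 := by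
    rw [hu, Matrix.mulVec_mulVec, DX.hU, Matrix.one_mulVec]
  have hun : vnorm u = 1 := by
    rw [hu, vnorm_orth DX.hU]; unfold vnorm; simp [Pi.single_apply]
  have h1 := cluster_bound z θ Pm hP c u
  have h2 : θ c ⬝ᵥ u = (DX.Uᵀ *ᵥ θ c) j := by
    rw [hu, Matrix.dotProduct_mulVec, ← Matrix.mulVec_transpose]; simp
  have h3 : vnorm (Xᵀ *ᵥ u) ≤ DX.sv j := by
    have := svd_upper DX u j (by
      intro l hl; rw [hUu]
      have : l ≠ j := by rintro rfl; omega
      simp [Pi.single_apply, this])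
    simpa [hun] using this
  have h4 := vnorm_transpose_le E u
  rw [hun, mul_one] at h4
  have d : vnorm (Pmᵀ *ᵥ u) ≤ vnorm (Xᵀ *ᵥ u) + vnorm (Eᵀ *ᵥ u) := by
    have : Pmᵀ *ᵥ u = Xᵀ *ᵥ u + -(Eᵀ *ᵥ u) := by
      rw [hX, Matrix.transpose_add, Matrix.add_mulVec]; abel
    rw [this, ← vnorm_neg (Eᵀ *ᵥ u)]
    exact vnorm_add_le _ _
  rw [h2] at h1
  exact h1.trans (pow_le_pow_left₀ (vnorm_nonneg _) (by linarith) 2)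

theorem scalar_key {e lam s t G a b th ep m : ℝ} (he : 0 < e) (hl : 16 * e < lam)
    (hs : lam - e ≤ s) (ht0 : 0 ≤ t) (ht : t ≤ e) (hm : 0 < m)
    (hG : (s ^ 2 - t ^ 2) * G = b * a) (ha : a = th + ep) (hth : m * th ^ 2 ≤ (s + e) ^ 2) :
    G ^ 2 ≤ b ^ 2 * (13 / 4 / lam ^ 2 * (1 / m + ep ^ 2 / lam ^ 2)) := by
  have hlam : 0 < lam := by linarith
  have hs1 : 15 / 16 * lam ≤ s := by linarith
  have hs0 : 0 < s := by linarith
  have hts : 15 * t ≤ s := by linarith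
  have hes : 15 * e ≤ s := by linarith
  have h1 : 224 / 225 * s ^ 2 ≤ s ^ 2 - t ^ 2 := by nlinarith
  have h2 : (224 / 225 * s ^ 2) ^ 2 * G ^ 2 ≤ b ^ 2 * a ^ 2 := by
    have q0 : b ^ 2 * a ^ 2 = (s ^ 2 - t ^ 2) ^ 2 * G ^ 2 := by rw [← mul_pow, ← mul_pow, hG]
    rw [q0]
    exact mul_le_mul_of_nonneg_right (pow_le_pow_left₀ (by positivity) h1 2) (sq_nonneg G)
  have h3 : m * th ^ 2 ≤ (16 / 15 * s) ^ 2 :=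
    hth.trans (pow_le_pow_left₀ (by linarith) (by linarith) 2)
  have h4 : a ^ 2 ≤ 2 * th ^ 2 + 2 * ep ^ 2 := by rw [ha]; nlinarith [sq_nonneg (th - ep)]
  have h5 : th ^ 2 ≤ (16 / 15) ^ 2 * s ^ 2 * (1 / m) := by
    rw [mul_one_div, le_div_iff₀ hm]; linarith
  have h6 : lam ^ 2 ≤ (16 / 15) ^ 2 * s ^ 2 := by nlinarith
  have h7 : lam ^ 2 * a ^ 2 ≤ 2 * (16 / 15) ^ 4 * s ^ 4 * (1 / m + ep ^ 2 / lam ^ 2) := by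
    have q1 : lam ^ 2 * th ^ 2 ≤ ((16 / 15) ^ 2 * s ^ 2) * ((16 / 15) ^ 2 * s ^ 2 * (1 / m)) := by
      gcongr
    have q2 : lam ^ 2 * ep ^ 2 ≤ (16 / 15) ^ 4 * s ^ 4 * (ep ^ 2 / lam ^ 2) := by
      have : lam ^ 2 * ep ^ 2 = lam ^ 2 * lam ^ 2 * (ep ^ 2 / lam ^ 2) := by field_simp
      rw [this]
      have : lam ^ 2 * lam ^ 2 ≤ ((16 / 15) ^ 2 * s ^ 2) * ((16 / 15) ^ 2 * s ^ 2) := by gcongr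
      refine mul_le_mul_of_nonneg_right (by linarith) (by positivity)
    have q3 := mul_le_mul_of_nonneg_left h4 (sq_nonneg lam)
    linarith
  set R := 1 / m + ep ^ 2 / lam ^ 2 with hR
  have hR0 : 0 ≤ R := by positivity
  have h8 : (224 / 225) ^ 2 * s ^ 4 * (lam ^ 2 * G ^ 2) ≤ s ^ 4 * (2 * (16 / 15) ^ 4 * R * b ^ 2) := by
    have q1 := mul_le_mul_of_nonneg_left h2 (sq_nonneg lam)
    have q2 := mul_le_mul_of_nonneg_left h7 (sq_nonneg b)
    linarith
  have h9 : (224 / 225) ^ 2 * (lam ^ 2 * G ^ 2) ≤ (2 * (16 / 15) ^ 4 * R * b ^ 2) := by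
    refine le_of_mul_le_mul_left ?_ (show 0 < s ^ 4 by positivity)
    linarith
  have h10 : G ^ 2 * lam ^ 2 ≤ b ^ 2 * (13 / 4) * R := by
    have : 0 ≤ R * b ^ 2 := by positivity
    nlinarith
  have : b ^ 2 * (13 / 4 / lam ^ 2 * R) = b ^ 2 * (13 / 4) * R / lam ^ 2 := by ring
  rw [this, le_div_iff₀ (by positivity)]
  exact h10

theorem final_arith {T e lam K m q v : ℝ} (hT : 0 ≤ T) (he : 0 < e) (hl : 16 * e < lam)
    (hK : 0 ≤ K) (hm : 0 < m) (hq0 : 0 ≤ q) (hv : 0 ≤ v) (hqv : q ≤ v + T * e)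
    (h : T ^ 2 ≤ 26 * e ^ 2 / lam ^ 2 * (K / m + q ^ 2 / lam ^ 2)) :
    T ≤ 128 / (lam / e) * (Real.sqrt (K / m) + v / lam) := by
  have hlam : 0 < lam := by linarith
  set r := e / lam with hr
  have hr0 : 0 < r := by positivity
  have hr1 : r < 1 / 16 := by rw [hr, div_lt_iff₀ hlam]; linarith
  set s := Real.sqrt (K / m) with hs
  have hs0 : 0 ≤ s := Real.sqrt_nonneg _
  have hs2 : K / m = s ^ 2 := (Real.sq_sqrt (by positivity)).symm
  have h1 : T ≤ 6 * r * (s + q / lam) := by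
    refine le_of_sq_le_sq (h.trans ?_) (by positivity)
    have : 26 * e ^ 2 / lam ^ 2 = 26 * r ^ 2 := by rw [hr]; ring
    rw [this, hs2]
    have : q ^ 2 / lam ^ 2 = (q / lam) ^ 2 := by ring
    rw [this]
    have hq : 0 ≤ q / lam := by positivity
    have : (6 * r * (s + q / lam)) ^ 2 - 26 * r ^ 2 * (s ^ 2 + (q / lam) ^ 2) =
      r ^ 2 * (10 * s ^ 2 + 10 * (q / lam) ^ 2 + 72 * (s * (q / lam))) := by ring
    have : 0 ≤ r ^ 2 * (10 * s ^ 2 + 10 * (q / lam) ^ 2 + 72 * (s * (q / lam))) := by positivity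
    linarith
  have h2 : q / lam ≤ v / lam + T * r := by
    rw [hr, ← mul_div_assoc, ← add_div]; gcongr
  have h3 : 128 / (lam / e) = 128 * r := by rw [hr]; field_simp
  rw [h3]
  set V := v / lam with hV
  have hV0 : 0 ≤ V := by positivity
  have h4 : T ≤ 6 * r * (s + (V + T * r)) := h1.trans (by gcongr)
  have h5 : r * r * T ≤ 1 / 16 * (1 / 16) * T := by gcongr
  have h6 : 0 ≤ r * (s + V) := by positivity
  nlinarith

/-- **Theorem 2 (singular subspace perturbation in mixture models).**
Mixture model `X = P + E`, `P` with columns `θ_{z j}`, `κ = rank P` (`λ_κ > 0`, `λ_{κ+1} = 0`).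
Assume `βn/k² ≥ 10` and `ρ₀ := λ_κ/‖E‖ > 16`.  Then for every `i`,
`‖Û_{1:κ}Û_{1:κ}ᵀ − Û_{−i,1:κ}Û_{−i,1:κ}ᵀ‖_F ≤ (128/ρ₀)(√(kκ/(βn)) + ‖Û_{−i,1:κ}Û_{−i,1:κ}ᵀ ε_i‖/λ_κ)`. -/
theorem mixture_perturbation
    (p n k : ℕ) (z : Fin (n + 1) → Fin k) (θ : Fin k → Fin p → ℝ)
    (Pm E X : Matrix (Fin p) (Fin (n + 1)) ℝ)
    (hP : ∀ a j, Pm a j = θ (z j) a) (hX : X = Pm + E)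
    (κ : ℕ) (hκ0 : 0 < κ) (hκk : κ ≤ k)
    (DP : SVDData p (n + 1) Pm)
    (hrank_pos : 0 < DP.sv (κ - 1)) (hrank_zero : DP.sv κ = 0)
    (hβ : 10 ≤ betaMin (n + 1) k z * ((n : ℝ) + 1) / (k : ℝ) ^ 2)
    (hgap : 16 < DP.sv (κ - 1) / opnorm E)
    (DX : SVDData p (n + 1) X) (i : Fin (n + 1))
    (DXi : SVDData p n (X.submatrix id i.succAbove)) :
    fnorm (projr DX.U κ - projr DXi.U κ) ≤
      128 / (DP.sv (κ - 1) / opnorm E) *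
        (Real.sqrt ((k : ℝ) * κ / (betaMin (n + 1) k z * ((n : ℝ) + 1))) +
          vnorm ((projr DXi.U κ).mulVec fun a => E a i) / DP.sv (κ - 1)) := by
  set e := opnorm E with he_def
  set lam := DP.sv (κ - 1) with hlam_def
  have he0 : 0 ≤ e := opnorm_nonneg E
  have he : 0 < e := by
    rcases he0.eq_or_lt with h | h
    · rw [← h, div_zero] at hgap; norm_num at hgap
    · exact h
  have hl : 16 * e < lam := by rwa [lt_div_iff₀ he] at hgap
  have hκp : κ - 1 < p := by
    by_contra hcon
    have := DP.sv_zero (κ - 1) (by omega)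
    rw [hlam_def, this] at hrank_pos
    exact lt_irrefl _ hrank_pos
  have hk : (1 : ℝ) ≤ k := by exact_mod_cast (show 1 ≤ k by omega)
  set N : ℝ := ⨅ a : Fin k, ((Finset.univ.filter fun i => z i = a).card : ℝ) with hN
  have hB : betaMin (n + 1) k z * ((n : ℝ) + 1) = k * N := by
    unfold betaMin
    rw [← hN]
    have : (n : ℝ) + 1 ≠ 0 := by positivity
    push_cast
    field_simp
  have hNm : N ≤ ((Finset.univ.filter fun j => z j = z i).card : ℝ) :=
    ciInf_le (Set.finite_range _).bddBelow (z i)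
  rw [hB] at hβ ⊢
  have hN10 : 10 ≤ N := by
    rw [le_div_iff₀ (by positivity)] at hβ
    have : 10 * (k : ℝ) ≤ N := by
      refine le_of_mul_le_mul_left ?_ (show (0 : ℝ) < k by linarith)
      linarith
    linarith
  have hdiv : (k : ℝ) * κ / (k * N) = κ / N := by
    rw [mul_div_mul_left]; linarith
  rw [hdiv]
  have hw1 : lam ≤ DX.sv (κ - 1) + e := weyl_lower hX DP DX (κ - 1) hκp
  have hw2 : DXi.sv κ ≤ e := weyl_upper hX DP i DXi κ hrank_zero
  have hε : vnorm (fun a => E a i) ≤ e := vnorm_col_le E i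
  have hxi : (fun a => X a i) = θ (z i) + fun a => E a i := by
    ext a; simp [hX, hP]
  have hperp : ∑ l : Fin p, (if (l : ℕ) < κ then 0 else (DXi.Uᵀ *ᵥ fun a => X a i) l ^ 2)
      ≤ 4 * e ^ 2 := by
    have h1 := theta_perp z θ Pm E X hP hX κ i DXi hw2 (hN10.trans hNm)
    have h2 : ∑ l : Fin p, (DXi.Uᵀ *ᵥ fun a => E a i) l ^ 2 ≤ e ^ 2 := by
      rw [← orth_vnorm_sq DXi.hU]
      exact pow_le_pow_left₀ (vnorm_nonneg _) hε 2
    have h3 : ∑ l : Fin p, (if (l : ℕ) < κ then 0 else (DXi.Uᵀ *ᵥ fun a => X a i) l ^ 2) ≤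
        ∑ l : Fin p, (2 * (if (l : ℕ) < κ then 0 else (DXi.Uᵀ *ᵥ θ (z i)) l ^ 2) +
          2 * (DXi.Uᵀ *ᵥ fun a => E a i) l ^ 2) := by
      refine Finset.sum_le_sum fun l _ => ?_
      split_ifs
      · positivity
      · rw [hxi, Matrix.mulVec_add, Pi.add_apply]
        nlinarith [sq_nonneg ((DXi.Uᵀ *ᵥ θ (z i)) l - (DXi.Uᵀ *ᵥ fun a => E a i) l)]
    rw [Finset.sum_add_distrib, ← Finset.mul_sum, ← Finset.mul_sum] at h3
    nlinarith [sq_nonneg e]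
  set T := fnorm (projr DX.U κ - projr DXi.U κ) with hT
  have hT0 : 0 ≤ T := fnorm_nonneg _
  set q := vnorm (projr DX.U κ *ᵥ fun a => E a i) with hq
  set v := vnorm (projr DXi.U κ *ᵥ fun a => E a i) with hv
  have hqv : q ≤ v + T * e := by
    have h1 : projr DX.U κ *ᵥ (fun a => E a i) = projr DXi.U κ *ᵥ (fun a => E a i) +
        (projr DX.U κ - projr DXi.U κ) *ᵥ (fun a => E a i) := by
      rw [Matrix.sub_mulVec]; abel
    rw [hq, h1]
    refine (vnorm_add_le _ _).trans ?_
    have h2 := vnorm_le_fnorm (projr DX.U κ - projr DXi.U κ) (fun a => E a i)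
    have h3 := mul_le_mul_of_nonneg_left hε hT0
    linarith
  refine final_arith hT0 he hl (Nat.cast_nonneg κ) (by linarith) (vnorm_nonneg _) (vnorm_nonneg _)
    hqv ?_
  have hlam : 0 < lam := by linarith
  have hN0 : 0 < N := by linarith
  rw [hT, fnorm_proj_sub DX.hU DXi.hU]
  have hG : ∀ j : Fin p, (j : ℕ) < κ →
      (∑ l : Fin p, if (l : ℕ) < κ then 0 else (DXi.Uᵀ * DX.U) l j ^ 2) ≤
        4 * e ^ 2 * (13 / 4 / lam ^ 2 * (1 / N + (DX.Uᵀ *ᵥ fun a => E a i) j ^ 2 / lam ^ 2)) := by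
    intro j hj
    refine le_trans ?_ (mul_le_mul_of_nonneg_right hperp (by positivity))
    rw [Finset.sum_mul]
    refine Finset.sum_le_sum fun l _ => ?_
    split_ifs with hlκ
    · simp
    · refine scalar_key he hl (s := DX.sv j) (t := DXi.sv l) (th := (DX.Uᵀ *ᵥ θ (z i)) j)
        ?_ (DXi.sv_nonneg _) ((DXi.sv_anti _ _ (by omega)).trans hw2) hN0
        (key_eq DX i DXi l j) ?_ ?_
      · have := DX.sv_anti j (κ - 1) (by omega)
        linarith
      · rw [hxi, Matrix.mulVec_add, Pi.add_apply]
      · refine le_trans ?_ (theta_bound z θ Pm E X hP hX DX (z i) j)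
        exact mul_le_mul_of_nonneg_right hNm (sq_nonneg _)
  have hsum : (∑ j : Fin p, if (j : ℕ) < κ then
        (∑ l : Fin p, if (l : ℕ) < κ then 0 else (DXi.Uᵀ * DX.U) l j ^ 2) else 0) ≤
      ∑ j : Fin p, (13 * e ^ 2 / lam ^ 2) * ((1 / N) * (if (j : ℕ) < κ then 1 else 0) +
        (1 / lam ^ 2) * (if (j : ℕ) < κ then (DX.Uᵀ *ᵥ fun a => E a i) j ^ 2 else 0)) := by
    refine Finset.sum_le_sum fun j _ => ?_
    split_ifs with hj
    · refine (hG j hj).trans (le_of_eq ?_)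
      ring
    · simp
  rw [← Finset.mul_sum, Finset.sum_add_distrib, ← Finset.mul_sum, ← Finset.mul_sum,
    ← projr_vnorm_sq DX.hU, ← hq] at hsum
  have hcard : (∑ j : Fin p, if (j : ℕ) < κ then (1 : ℝ) else 0) = κ := by
    rw [Fin.sum_univ_eq_sum_range (fun j => if j < κ then (1 : ℝ) else 0) p, Finset.sum_ite]
    have : (Finset.range p).filter (fun j => j < κ) = Finset.range κ := by
      ext a; simp; omega
    simp [this]
  rw [hcard] at hsum
  calc _ ≤ 2 * _ := mul_le_mul_of_nonneg_left hsum (by norm_num)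
    _ = _ := by ring
end
end

section
/- Let ẑ together with centers θ̂_1,…,θ̂_k be any minimizer of the k-means objective Σ_{i∈[n]} ‖Û_{1:r}Û_{1:r}ᵀ X_i − θ_{z_i}‖² over z ∈ [k]^n and θ_1,…,θ_k ∈ ℝ^p, where κ ≤ r ≤ k. If ψ₀ := Δ / (β^{−1/2} k n^{−1/2} ‖E‖) ≥ 16, then ℓ(ẑ,z*) ≤ β/(2k); moreover there exists a bijection φ of [k] such that ℓ(ẑ,z*) = (1/n)|{i ∈ [n] : ẑ_i ≠ φ(z*_i)}| ≤ 128 k ‖E‖² / (n Δ²) and max_{a∈[k]} ‖θ̂_{φ(a)} − θ*_a‖ ≤ 128 β^{−1/2} k n^{−1/2} ‖E‖. -/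
open Matrix MeasureTheory ProbabilityTheory
open scoped BigOperators ENNReal NNReal

noncomputable section

lemma aux_opn {p n : ℕ} (E : Matrix (Fin p) (Fin n) ℝ) (v : Fin n → ℝ) :
    (E *ᵥ v) ⬝ᵥ (E *ᵥ v) ≤ opnorm E ^ 2 * (v ⬝ᵥ v) := by
  have h := (LinearMap.toContinuousLinearMap (Matrix.toEuclideanLin E)).le_opNorm (WithLp.toLp 2 v)
  have h2 := pow_le_pow_left₀ (norm_nonneg _) h 2
  rw [mul_pow, EuclideanSpace.norm_sq_eq, EuclideanSpace.norm_sq_eq] at h2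
  simp only [Real.norm_eq_abs, sq_abs] at h2
  simpa [opnorm, dotProduct, ← pow_two] using h2

lemma aux_frob_s5 {p n k : ℕ} (A : Matrix (Fin p) (Fin n) ℝ) (C : ℝ) (hC : 0 ≤ C)
    (hr : A.rank ≤ k) (h : ∀ v, (A *ᵥ v) ⬝ᵥ (A *ᵥ v) ≤ C * (v ⬝ᵥ v)) :
    ∑ i, ∑ a, (A a i) ^ 2 ≤ k * C := by
  have hH : (Aᵀ * A).IsHermitian := by
    simpa using Matrix.isHermitian_conjTranspose_mul_self A
  have e1 : ∑ i, ∑ a, (A a i) ^ 2 = (Aᵀ * A).trace := by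
    simp [Matrix.trace, Matrix.mul_apply, pow_two]
  have e2 := hH.trace_eq_sum_eigenvalues
  have e3 := hH.rank_eq_card_non_zero_eigs
  rw [Matrix.rank_transpose_mul_self] at e3
  have hle : ∀ i, hH.eigenvalues i ≤ C := by
    intro i
    have h1 := hH.mulVec_eigenvectorBasis i
    set v : Fin n → ℝ := (hH.eigenvectorBasis i).ofLp with hv
    have h2 : v ⬝ᵥ v = 1 := by
      have := hH.eigenvectorBasis.orthonormal.1 i
      have h3 : ‖hH.eigenvectorBasis i‖ ^ 2 = 1 := by rw [this]; norm_num
      rw [EuclideanSpace.norm_sq_eq] at h3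
      simp only [Real.norm_eq_abs, sq_abs] at h3
      simpa [dotProduct, ← pow_two, hv] using h3
    have h3 := h v
    have h4 : (A *ᵥ v) ⬝ᵥ (A *ᵥ v) = v ⬝ᵥ ((Aᵀ * A) *ᵥ v) := by
      rw [← Matrix.mulVec_mulVec, Matrix.dotProduct_mulVec v, Matrix.vecMul_transpose]
    rw [h4, h1, dotProduct_smul, h2] at h3
    simpa using h3
  rw [e1, e2]
  simp only [RCLike.ofReal_real_eq_id, id]
  calc ∑ i, hH.eigenvalues i ≤ ∑ i, if hH.eigenvalues i ≠ 0 then C else 0 := by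
        apply Finset.sum_le_sum
        intro i _
        split_ifs with hh
        · exact hle i
        · push Not at hh; exact hh.le
    _ = A.rank * C := by
        rw [← Finset.sum_filter, Finset.sum_const, nsmul_eq_mul, e3, Fintype.card_subtype]
    _ ≤ k * C := by gcongr

lemma aux_orth {m n : ℕ} (V : Matrix (Fin n) (Fin m) ℝ) (h : Vᵀ * V = 1) (w : Fin m → ℝ) :
    (V *ᵥ w) ⬝ᵥ (V *ᵥ w) = w ⬝ᵥ w := by
  have : (V *ᵥ w) ⬝ᵥ (V *ᵥ w) = w ⬝ᵥ ((Vᵀ * V) *ᵥ w) := by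
    rw [← Matrix.mulVec_mulVec, Matrix.dotProduct_mulVec w, Matrix.vecMul_transpose]
  rw [this, h, Matrix.one_mulVec]

lemma aux_projr_s5 {p : ℕ} (U : Matrix (Fin p) (Fin p) ℝ) (r : ℕ) :
    projr U r = U * Matrix.diagonal (fun l : Fin p => if (l : ℕ) < r then (1 : ℝ) else 0) * Uᵀ := by
  ext i j
  rw [Matrix.mul_apply]
  simp only [Matrix.mul_diagonal, projr, Matrix.of_apply, Matrix.transpose_apply]
  refine Finset.sum_congr rfl fun l _ => ?_
  split_ifs <;> simp

lemma aux_projr_rank {p : ℕ} (U : Matrix (Fin p) (Fin p) ℝ) (r : ℕ) : (projr U r).rank ≤ r := by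
  rw [aux_projr_s5]
  refine (Matrix.rank_mul_le_left _ _).trans ((Matrix.rank_mul_le_right _ _).trans ?_)
  rw [Matrix.rank_diagonal]
  have : Fintype.card {i : Fin p // (if (i : ℕ) < r then (1 : ℝ) else 0) ≠ 0} ≤ Fintype.card (Fin r) := by
    apply Fintype.card_le_of_injective
      (fun i => (⟨i.1.1, by
        have := i.2
        by_contra hh
        simp [hh] at this⟩ : Fin r))
    intro i j hij
    simp only [Fin.mk.injEq] at hij
    exact Subtype.ext (Fin.ext hij)
  simpa using this

lemma aux_tail {p n : ℕ} (X : Matrix (Fin p) (Fin n) ℝ) (DX : SVDData p n X) (r : ℕ)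
    (v : Fin n → ℝ) :
    ((projr DX.U r * X - X) *ᵥ v) ⬝ᵥ ((projr DX.U r * X - X) *ᵥ v) ≤ DX.sv r ^ 2 * (v ⬝ᵥ v) := by
  set U := DX.U
  set D := (Matrix.of fun (i : Fin p) (j : Fin n) => if (i : ℕ) = (j : ℕ) then DX.sv (i : ℕ) else 0) with hD
  set G := Matrix.diagonal (fun l : Fin p => if (l : ℕ) < r then (1 : ℝ) else 0) with hG
  have e : projr U r * X - X = U * ((G * D - D) * DX.Vᵀ) := by
    rw [aux_projr_s5]
    have hx : X = U * D * DX.Vᵀ := DX.decomp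
    have hu : Uᵀ * U = 1 := DX.hU
    calc _ = (U * G * Uᵀ) * (U * D * DX.Vᵀ) - (U * D * DX.Vᵀ) := by rw [← hx]
      _ = U * G * (Uᵀ * U) * D * DX.Vᵀ - U * D * DX.Vᵀ := by simp only [Matrix.mul_assoc]
      _ = _ := by rw [hu]; simp only [Matrix.mul_one, Matrix.mul_assoc, Matrix.sub_mul, Matrix.mul_sub]
  rw [e, ← Matrix.mulVec_mulVec, aux_orth _ DX.hU, ← Matrix.mulVec_mulVec]
  have hV' : DX.V * DX.Vᵀ = 1 := mul_eq_one_comm.mp DX.hV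
  have hw := aux_orth DX.Vᵀ (by simpa using hV') v
  rw [← hw]
  set w := DX.Vᵀ *ᵥ v
  have hcomp : ∀ i : Fin p, (((G * D - D) *ᵥ w) i) ^ 2 ≤
      DX.sv r ^ 2 * ∑ j : Fin n, if (i : ℕ) = (j : ℕ) then w j ^ 2 else 0 := by
    intro i
    have h1 : ((G * D - D) *ᵥ w) i = ∑ j : Fin n, if (i : ℕ) = (j : ℕ) then
        ((if (i : ℕ) < r then (1 : ℝ) else 0) - 1) * DX.sv i * w j else 0 := by
      simp only [Matrix.mulVec, dotProduct, Matrix.sub_apply, hG, Matrix.diagonal_mul, hD, Matrix.of_apply]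
      refine Finset.sum_congr rfl fun j _ => ?_
      split_ifs <;> ring
    rw [h1]
    by_cases hi : (i : ℕ) < n
    · have hs : ∀ j : Fin n, ((i : ℕ) = (j : ℕ)) ↔ (⟨i, hi⟩ : Fin n) = j := fun j => by
        rw [Fin.ext_iff]
      simp only [hs, Finset.sum_ite_eq, Finset.mem_univ, if_true]
      rw [mul_pow]
      refine mul_le_mul_of_nonneg_right ?_ (sq_nonneg _)
      by_cases hir : (i : ℕ) < r
      · simp [hir]; positivity
      · simp only [hir, if_false, zero_sub, neg_mul, one_mul, neg_sq]
        exact pow_le_pow_left₀ (DX.sv_nonneg _) (DX.sv_anti r i (by omega)) 2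
    · have hs : ∀ j : Fin n, ¬ ((i : ℕ) = (j : ℕ)) := fun j => by omega
      simp [hs]
  calc _ = ∑ i, (((G * D - D) *ᵥ w) i) ^ 2 := by simp [dotProduct, pow_two]
    _ ≤ ∑ i : Fin p, DX.sv r ^ 2 * ∑ j : Fin n, (if (i : ℕ) = (j : ℕ) then w j ^ 2 else 0) :=
        Finset.sum_le_sum fun i _ => hcomp i
    _ = DX.sv r ^ 2 * ∑ j : Fin n, ∑ i : Fin p, (if (i : ℕ) = (j : ℕ) then w j ^ 2 else 0) := by
        rw [← Finset.mul_sum, Finset.sum_comm]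
    _ ≤ DX.sv r ^ 2 * ∑ j : Fin n, w j ^ 2 := by
        gcongr with j _
        by_cases hj : (j : ℕ) < p
        · have hs : ∀ i : Fin p, ((i : ℕ) = (j : ℕ)) ↔ i = (⟨j, hj⟩ : Fin p) := fun i => by
            rw [Fin.ext_iff]
          simp [hs]
        · have hs : ∀ i : Fin p, ¬ ((i : ℕ) = (j : ℕ)) := fun i => by omega
          simp only [hs, if_false, Finset.sum_const_zero]; exact sq_nonneg _
    _ = _ := by simp [dotProduct, pow_two]

lemma aux_weyl_s5 {p n : ℕ} (Pm E X : Matrix (Fin p) (Fin n) ℝ) (hX : X = Pm + E)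
    (DX : SVDData p n X) (r : ℕ) (hr : Pm.rank ≤ r) : DX.sv r ^ 2 ≤ opnorm E ^ 2 := by
  by_cases hm : min p n ≤ r
  · rw [DX.sv_zero r hm]; nlinarith [sq_nonneg (opnorm E)]
  have hp : r + 1 ≤ p := by omega
  have hn : r + 1 ≤ n := by omega
  set V' := DX.V.submatrix id (Fin.castLE hn) with hV'
  have hVV : DX.Vᵀ * V' = (1 : Matrix (Fin n) (Fin n) ℝ).submatrix id (Fin.castLE hn) := by
    rw [← DX.hV, hV']
    ext i j; simp [Matrix.mul_apply]
  have hVo : V'ᵀ * V' = 1 := by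
    have : V'ᵀ * V' = (DX.Vᵀ * DX.V).submatrix (Fin.castLE hn) (Fin.castLE hn) := by
      ext i j; simp [Matrix.mul_apply, hV']
    rw [this, DX.hV, Matrix.submatrix_one _ (Fin.castLE_injective hn)]
  obtain ⟨w, hw0, hw⟩ : ∃ w : Fin (r+1) → ℝ, w ≠ 0 ∧ (Pm * V') *ᵥ w = 0 := by
    have hrk : (Pm * V').rank ≤ r := (Matrix.rank_mul_le_left _ _).trans hr
    have h1 := (Pm * V').mulVecLin.finrank_range_add_finrank_ker
    have h2 : Module.finrank ℝ (LinearMap.range (Pm * V').mulVecLin) = (Pm * V').rank := rfl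
    rw [h2] at h1
    simp only [Module.finrank_fin_fun] at h1
    have h3 : LinearMap.ker (Pm * V').mulVecLin ≠ ⊥ := by
      intro hb
      rw [hb, finrank_bot] at h1
      omega
    obtain ⟨w, hw, hw0⟩ := Submodule.exists_mem_ne_zero_of_ne_bot h3
    exact ⟨w, hw0, by simpa using hw⟩
  set D := (Matrix.of fun (i : Fin p) (j : Fin n) => if (i : ℕ) = (j : ℕ) then DX.sv (i : ℕ) else 0) with hD
  have hXv : X *ᵥ (V' *ᵥ w) = E *ᵥ (V' *ᵥ w) := by
    rw [hX, Matrix.add_mulVec, Matrix.mulVec_mulVec w Pm, hw, zero_add]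
  have hE := aux_opn E (V' *ᵥ w)
  rw [← hXv, aux_orth V' hVo] at hE
  have hx : X * V' = DX.U * D.submatrix id (Fin.castLE hn) := by
    have h0 : X = DX.U * D * DX.Vᵀ := DX.decomp
    refine (congrArg (fun Y => Y * V') h0).trans ?_
    rw [Matrix.mul_assoc, hVV, Matrix.mul_assoc]
    congr 1
    ext i j
    simp [Matrix.mul_apply, Matrix.one_apply]
  rw [Matrix.mulVec_mulVec, hx, ← Matrix.mulVec_mulVec, aux_orth _ DX.hU] at hE
  set y := D.submatrix id (Fin.castLE hn) *ᵥ w with hy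
  have hyj : ∀ j : Fin (r+1), y (Fin.castLE hp j) = DX.sv j * w j := by
    intro j
    simp only [hy, Matrix.mulVec, dotProduct, Matrix.submatrix_apply, hD, Matrix.of_apply, id, Fin.val_castLE,
      ite_mul, zero_mul]
    have hs : ∀ i : Fin (r+1), ((j : ℕ) = (i : ℕ)) ↔ j = i := fun i => by rw [Fin.ext_iff]
    simp [hs]
  have hpos : 0 < w ⬝ᵥ w := by
    have : 0 ≤ w ⬝ᵥ w := by
      simp only [dotProduct]; exact Finset.sum_nonneg fun i _ => mul_self_nonneg _
    refine lt_of_le_of_ne this fun h => hw0 ?_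
    exact dotProduct_self_eq_zero.mp h.symm
  have hlow : DX.sv r ^ 2 * (w ⬝ᵥ w) ≤ y ⬝ᵥ y := by
    calc DX.sv r ^ 2 * (w ⬝ᵥ w) = ∑ j, DX.sv r ^ 2 * (w j * w j) := by
          rw [dotProduct, Finset.mul_sum]
      _ ≤ ∑ j : Fin (r+1), y (Fin.castLE hp j) * y (Fin.castLE hp j) := by
          apply Finset.sum_le_sum
          intro j _
          rw [hyj]
          have := pow_le_pow_left₀ (DX.sv_nonneg _) (DX.sv_anti j r (by omega)) 2
          nlinarith [mul_self_nonneg (w j)]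
      _ = ∑ i ∈ Finset.univ.map ⟨Fin.castLE hp, Fin.castLE_injective hp⟩, y i * y i := by
          rw [Finset.sum_map]; rfl
      _ ≤ ∑ i, y i * y i := Finset.sum_le_univ_sum_of_nonneg fun i => mul_self_nonneg _
  exact le_of_mul_le_mul_right (hlow.trans hE) hpos

lemma aux_rank_sub {p n : ℕ} (A B : Matrix (Fin p) (Fin n) ℝ) : (A - B).rank ≤ A.rank + B.rank := by
  have h1 : LinearMap.range (A - B).mulVecLin ≤
      LinearMap.range A.mulVecLin ⊔ LinearMap.range B.mulVecLin := by
    rintro _ ⟨v, rfl⟩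
    simp only [Matrix.mulVecLin_apply, Matrix.sub_mulVec]
    exact Submodule.sub_mem _ (Submodule.mem_sup_left ⟨v, rfl⟩) (Submodule.mem_sup_right ⟨v, rfl⟩)
  exact (Submodule.finrank_mono h1).trans (Submodule.finrank_add_le_finrank_add_finrank _ _)

lemma aux_pert {p n k : ℕ} (Pm E X : Matrix (Fin p) (Fin n) ℝ) (hX : X = Pm + E)
    (DX : SVDData p n X) (r : ℕ) (hr : Pm.rank ≤ r) (hrk : r ≤ k) :
    ∑ i, ∑ a, ((projr DX.U r * X) a i - Pm a i) ^ 2 ≤ 8 * k * opnorm E ^ 2 := by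
  have h := aux_frob_s5 (k := 2 * k) (projr DX.U r * X - Pm) (4 * opnorm E ^ 2) (by positivity) ?_ ?_
  · simp only [Matrix.sub_apply] at h
    refine h.trans (le_of_eq ?_)
    push_cast; ring
  · have h1 : (projr DX.U r * X).rank ≤ r := (Matrix.rank_mul_le_left _ _).trans (aux_projr_rank _ _)
    have h2 := aux_rank_sub (projr DX.U r * X) Pm
    omega
  · intro v
    have e : projr DX.U r * X - Pm = (projr DX.U r * X - X) + E := by
      have : Pm = X - E := by rw [hX]; abel
      rw [this]; abel
    rw [e, Matrix.add_mulVec]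
    have h1 := aux_tail X DX r v
    have h2 := aux_opn E v
    have h3 := aux_weyl_s5 Pm E X hX DX r hr
    have hv : 0 ≤ v ⬝ᵥ v := by
      simp only [dotProduct]; exact Finset.sum_nonneg fun i _ => mul_self_nonneg _
    have h4 := mul_le_mul_of_nonneg_right h3 hv
    generalize (projr DX.U r * X - X) *ᵥ v = a at *
    generalize E *ᵥ v = b at *
    have h5 : (a + b) ⬝ᵥ (a + b) ≤ 2 * (a ⬝ᵥ a) + 2 * (b ⬝ᵥ b) := by
      simp only [dotProduct, Finset.mul_sum, ← Finset.sum_add_distrib, Pi.add_apply]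
      exact Finset.sum_le_sum fun i _ => by nlinarith [sq_nonneg (a i - b i)]
    linarith

lemma aux_comb {p n k : ℕ} (z zh : Fin n → Fin k) (θ c : Fin k → Fin p → ℝ) (T Δ m : ℝ)
    (hT : ∑ i, ∑ x, (c (zh i) x - θ (z i) x) ^ 2 ≤ T) (hΔ : 0 < Δ)
    (hsep : ∀ a b, a ≠ b → Δ ^ 2 ≤ ∑ x, (θ a x - θ b x) ^ 2)
    (hm0 : 0 < m) (hm : ∀ a, m ≤ ((Finset.univ.filter fun i => z i = a).card : ℝ))
    (h8 : 8 * T ≤ Δ ^ 2 * m) :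
    ∃ φ : Equiv.Perm (Fin k),
      ((Finset.univ.filter fun i => zh i ≠ φ (z i)).card : ℝ) ≤ 4 * T / Δ ^ 2 ∧
      (∀ φ' : Equiv.Perm (Fin k), ((Finset.univ.filter fun i => zh i ≠ φ (z i)).card : ℝ) ≤
        ((Finset.univ.filter fun i => zh i ≠ φ' (z i)).card : ℝ)) ∧
      ∀ a, (∑ x, (c (φ a) x - θ a x) ^ 2) * m ≤ 2 * T := by
  set d : Fin n → ℝ := fun i => ∑ x, (c (zh i) x - θ (z i) x) ^ 2 with hd
  have hd0 : ∀ i, 0 ≤ d i := fun i => Finset.sum_nonneg fun _ _ => sq_nonneg _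
  have hΔ2 : 0 < Δ ^ 2 := by positivity
  set S := Finset.univ.filter fun i => Δ ^ 2 ≤ 4 * d i with hS
  have hScard : (S.card : ℝ) ≤ 4 * T / Δ ^ 2 := by
    rw [le_div_iff₀ hΔ2]
    calc (S.card : ℝ) * Δ ^ 2 = ∑ i ∈ S, Δ ^ 2 := by simp
      _ ≤ ∑ i ∈ S, 4 * d i := Finset.sum_le_sum fun i hi => (Finset.mem_filter.mp hi).2
      _ ≤ ∑ i, 4 * d i := Finset.sum_le_univ_sum_of_nonneg fun i => by linarith [hd0 i]
      _ = 4 * ∑ i, d i := by rw [Finset.mul_sum]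
      _ ≤ 4 * T := by linarith
  have hhalf : 4 * T / Δ ^ 2 ≤ m / 2 := by
    rw [div_le_iff₀ hΔ2]; linarith
  have hrep : ∀ a, ∃ i, z i = a ∧ i ∉ S := by
    intro a
    by_contra hcon
    push Not at hcon
    have : (Finset.univ.filter fun i => z i = a) ⊆ S := fun i hi => hcon i (Finset.mem_filter.mp hi).2
    have h1 : ((Finset.univ.filter fun i => z i = a).card : ℝ) ≤ S.card := by
      exact_mod_cast Finset.card_le_card this
    linarith [hm a]
  have hkey : ∀ i j, i ∉ S → j ∉ S → zh i = zh j → z i = z j := by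
    intro i j hi hj hij
    by_contra hne
    have h1 := hsep _ _ hne
    have hi' : 4 * d i < Δ ^ 2 := by simpa [hS] using hi
    have hj' : 4 * d j < Δ ^ 2 := by simpa [hS] using hj
    have h2 : ∑ x, (θ (z i) x - θ (z j) x) ^ 2 ≤ 2 * d i + 2 * d j := by
      simp only [hd, Finset.mul_sum, ← Finset.sum_add_distrib]
      refine Finset.sum_le_sum fun x _ => ?_
      rw [hij]
      nlinarith [sq_nonneg ((c (zh j) x - θ (z i) x) + (c (zh j) x - θ (z j) x))]
    linarith
  choose rep hrz hrS using hrep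
  have hinj : Function.Injective (fun a => zh (rep a)) := by
    intro a b hab
    have := hkey _ _ (hrS a) (hrS b) hab
    rwa [hrz, hrz] at this
  set φ : Equiv.Perm (Fin k) := Equiv.ofBijective _ (Finite.injective_iff_bijective.mp hinj) with hφ
  have hφa : ∀ a, φ a = zh (rep a) := fun a => rfl
  have hgood : ∀ i, i ∉ S → zh i = φ (z i) := by
    intro i hi
    obtain ⟨b, hb⟩ := φ.surjective (zh i)
    rw [hφa] at hb
    have := hkey _ _ (hrS b) hi hb
    rw [hrz] at this
    rw [← this, hφa, hb]
  have herr : ((Finset.univ.filter fun i => zh i ≠ φ (z i)).card : ℝ) ≤ S.card := by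
    have : (Finset.univ.filter fun i => zh i ≠ φ (z i)) ⊆ S := by
      intro i hi
      by_contra hh
      exact (Finset.mem_filter.mp hi).2 (hgood i hh)
    exact_mod_cast Finset.card_le_card this
  refine ⟨φ, herr.trans hScard, ?_, ?_⟩
  · intro φ'
    by_cases he : φ' = φ
    · rw [he]
    obtain ⟨a, ha⟩ : ∃ a, φ' a ≠ φ a := by
      by_contra hcon; push Not at hcon; exact he (Equiv.ext hcon)
    have hsub : (Finset.univ.filter fun i => z i = a) ⊆
        (Finset.univ.filter fun i => zh i ≠ φ (z i)) ∪ (Finset.univ.filter fun i => zh i ≠ φ' (z i)) := by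
      intro i hi
      have hi := (Finset.mem_filter.mp hi).2
      simp only [Finset.mem_union, Finset.mem_filter, Finset.mem_univ, true_and, hi]
      by_contra hcon
      push Not at hcon
      exact ha (hcon.2.symm.trans hcon.1)
    have h1 : ((Finset.univ.filter fun i => z i = a).card : ℝ) ≤
        (Finset.univ.filter fun i => zh i ≠ φ (z i)).card +
        (Finset.univ.filter fun i => zh i ≠ φ' (z i)).card := by
      exact_mod_cast (Finset.card_le_card hsub).trans (Finset.card_union_le _ _)
    linarith [hm a]
  · intro a
    set R := (Finset.univ.filter fun i => z i = a) \ S with hR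
    have h1 : m / 2 ≤ R.card := by
      have : (Finset.univ.filter fun i => z i = a).card ≤ R.card + S.card := by
        have := Finset.le_card_sdiff S (Finset.univ.filter fun i => z i = a)
        rw [← hR] at this
        omega
      have : ((Finset.univ.filter fun i => z i = a).card : ℝ) ≤ R.card + S.card := by exact_mod_cast this
      linarith [hm a]
    have h0 : 0 ≤ ∑ x, (c (φ a) x - θ a x) ^ 2 := Finset.sum_nonneg fun _ _ => sq_nonneg _
    have h2 : (R.card : ℝ) * ∑ x, (c (φ a) x - θ a x) ^ 2 ≤ T := by
      calc (R.card : ℝ) * ∑ x, (c (φ a) x - θ a x) ^ 2 = ∑ i ∈ R, ∑ x, (c (φ a) x - θ a x) ^ 2 := by simp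
        _ = ∑ i ∈ R, d i := by
            refine Finset.sum_congr rfl fun i hi => ?_
            have hi := Finset.mem_sdiff.mp hi
            have hz := (Finset.mem_filter.mp hi.1).2
            simp only [hd]
            rw [hgood i hi.2, hz]
        _ ≤ ∑ i, d i := Finset.sum_le_univ_sum_of_nonneg hd0
        _ ≤ T := hT
    nlinarith

/-- **Proposition 1 (polynomial error rate of spectral clustering).**
Mixture model `X = P + E` with `κ = rank P ≤ r ≤ k`.  If
`ψ₀ := Δ/(β^{-1/2} k n^{-1/2} ‖E‖) ≥ 16`, then the spectral clustering `ẑ` (any global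
k-means minimizer on `Û_{1:r}Û_{1:r}ᵀ X`) satisfies `ℓ(ẑ,z*) ≤ β/(2k)`,
and there is a bijection `φ` of `[k]` with
`ℓ(ẑ,z*) = |{i : ẑ_i ≠ φ(z*_i)}|/n ≤ 128 k ‖E‖²/(n Δ²)` and
`max_a ‖θ̂_{φ(a)} − θ*_a‖ ≤ 128 β^{-1/2} k n^{-1/2} ‖E‖`. -/
theorem spectral_clustering_polynomial_rate
    (p n k : ℕ) (z : Fin n → Fin k) (θ : Fin k → Fin p → ℝ)
    (Pm E X : Matrix (Fin p) (Fin n) ℝ)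
    (hP : ∀ a j, Pm a j = θ (z j) a) (hX : X = Pm + E)
    (κ r : ℕ) (hrank : Pm.rank = κ) (hκr : κ ≤ r) (hrk : r ≤ k)
    (DX : SVDData p n X)
    (zh : Fin n → Fin k) (c : Fin k → Fin p → ℝ)
    (hkm : IsKMeans (projr DX.U r) X zh c)
    (hψ : 16 ≤ Delta θ /
      ((Real.sqrt (betaMin n k z))⁻¹ * (k : ℝ) * (Real.sqrt (n : ℝ))⁻¹ * opnorm E)) :
    miscl zh z ≤ betaMin n k z / (2 * (k : ℝ)) ∧
    ∃ φ : Equiv.Perm (Fin k),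
      miscl zh z = ((Finset.univ.filter fun i => zh i ≠ φ (z i)).card : ℝ) / n ∧
      miscl zh z ≤ 128 * (k : ℝ) * opnorm E ^ 2 / ((n : ℝ) * Delta θ ^ 2) ∧
      ∀ a : Fin k, vnorm (fun i => c (φ a) i - θ a i) ≤
        128 * ((Real.sqrt (betaMin n k z))⁻¹ * (k : ℝ) * (Real.sqrt (n : ℝ))⁻¹ * opnorm E) := by
  set e := opnorm E with he
  set B := (Real.sqrt (betaMin n k z))⁻¹ * (k : ℝ) * (Real.sqrt (n : ℝ))⁻¹ * e with hB
  set m : ℝ := ⨅ a : Fin k, ((Finset.univ.filter fun i => z i = a).card : ℝ) with hmdef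
  have hβ : betaMin n k z = (k : ℝ) / n * m := rfl
  have he0 : 0 ≤ e := norm_nonneg _
  have hm0 : 0 ≤ m := Real.iInf_nonneg fun a => Nat.cast_nonneg _
  have hB0 : 0 ≤ B := by positivity
  have hBne : B ≠ 0 := by
    intro h; rw [h, div_zero] at hψ; linarith
  have hBpos : 0 < B := lt_of_le_of_ne hB0 hBne.symm
  have hkne : (k : ℝ) ≠ 0 := by intro h; apply hBne; rw [hB, h]; simp
  have hnne : (n : ℝ) ≠ 0 := by intro h; apply hBne; rw [hB, h]; simp
  have hmne : m ≠ 0 := by intro h; apply hBne; rw [hB, hβ, h]; simp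
  have hk : (0 : ℝ) < k := lt_of_le_of_ne (Nat.cast_nonneg _) hkne.symm
  have hn : (0 : ℝ) < n := lt_of_le_of_ne (Nat.cast_nonneg _) hnne.symm
  have hm : 0 < m := lt_of_le_of_ne hm0 hmne.symm
  have hB2 : B ^ 2 * m = k * e ^ 2 := by
    rw [hB, mul_pow, mul_pow, mul_pow, inv_pow, inv_pow, Real.sq_sqrt hn.le,
      Real.sq_sqrt (by rw [hβ]; positivity), hβ]
    field_simp
  have hΔB : 16 * B ≤ Delta θ := (le_div_iff₀ hBpos).mp hψ
  have hΔ : 0 < Delta θ := by linarith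
  have hΔ2 : 256 * B ^ 2 ≤ Delta θ ^ 2 := by nlinarith
  have hsep : ∀ a b, a ≠ b → Delta θ ^ 2 ≤ ∑ x, (θ a x - θ b x) ^ 2 := by
    intro a b hab
    have h1 : Delta θ ≤ vnorm (fun i => θ a i - θ b i) :=
      ciInf_le (f := fun q : {q : Fin k × Fin k // q.1 ≠ q.2} =>
        vnorm (fun i => θ q.1.1 i - θ q.1.2 i)) (Set.finite_range _).bddBelow ⟨(a, b), hab⟩
    have h2 := pow_le_pow_left₀ hΔ.le h1 2
    rwa [vnorm, Real.sq_sqrt (Finset.sum_nonneg fun _ _ => sq_nonneg _)] at h2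
  have hmin : ∀ a, m ≤ ((Finset.univ.filter fun i => z i = a).card : ℝ) := fun a =>
    ciInf_le (Set.finite_range _).bddBelow a
  have hpert := aux_pert (k := k) Pm E X hX DX r (hrank ▸ hκr) hrk
  have hk1 := hkm z θ
  have hcol : ∀ i a, (projr DX.U r).mulVec (fun b => X b i) a = (projr DX.U r * X) a i :=
    fun i a => rfl
  simp only [hcol] at hk1
  simp only [hP] at hpert
  have hT : ∑ i, ∑ x, (c (zh i) x - θ (z i) x) ^ 2 ≤ 32 * k * e ^ 2 := by
    have h1 : ∑ i, ∑ x, (c (zh i) x - θ (z i) x) ^ 2 ≤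
        2 * (∑ i, ∑ a, ((projr DX.U r * X) a i - c (zh i) a) ^ 2) +
        2 * (∑ i, ∑ a, ((projr DX.U r * X) a i - θ (z i) a) ^ 2) := by
      simp only [Finset.mul_sum, ← Finset.sum_add_distrib]
      refine Finset.sum_le_sum fun i _ => Finset.sum_le_sum fun x _ => ?_
      nlinarith [sq_nonneg (((projr DX.U r * X) x i - c (zh i) x) +
        ((projr DX.U r * X) x i - θ (z i) x))]
    linarith
  obtain ⟨φ, h1, h2, h3⟩ := aux_comb z zh θ c (32 * k * e ^ 2) (Delta θ) m hT hΔ hsep hm hmin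
    (by nlinarith)
  have hmis : miscl zh z = ((Finset.univ.filter fun i => zh i ≠ φ (z i)).card : ℝ) / n := by
    unfold miscl
    congr 1
    exact le_antisymm (ciInf_le (Set.finite_range _).bddBelow φ) (le_ciInf h2)
  have hΔ2p : 0 < Delta θ ^ 2 := by positivity
  refine ⟨?_, φ, hmis, ?_, ?_⟩
  · have h4 : 4 * (32 * k * e ^ 2) / Delta θ ^ 2 ≤ m / 2 := by
      rw [div_le_iff₀ hΔ2p]; nlinarith
    have h5 : betaMin n k z / (2 * (k : ℝ)) = (m / 2) / n := by
      rw [hβ]; field_simp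
    rw [hmis, h5]
    gcongr
    exact h1.trans h4
  · have h5 : 128 * (k : ℝ) * e ^ 2 / ((n : ℝ) * Delta θ ^ 2) =
        (4 * (32 * k * e ^ 2) / Delta θ ^ 2) / n := by
      field_simp; ring
    rw [hmis, h5]
    gcongr
  · intro a
    have h4 := h3 a
    refine Real.sqrt_le_iff.mpr ⟨by positivity, ?_⟩
    have h5 : (∑ x, (c (φ a) x - θ a x) ^ 2) * m ≤ (64 * B ^ 2) * m := by linarith
    have h6 := le_of_mul_le_mul_right h5 hm
    nlinarith [sq_nonneg B]
end
end
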